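/- arXiv:1104.3659 — 5 statements merged into one kernel-verified Lean document; each statement's English description precedes it below -/
import Mathlib

section
/- Let n be a nonnegative integer. Then ζ(2n+3) = (1/(2n+2)) ∑_{j=0}^{n} (3j+5) ∑_{k=1}^∞ (−1)^{k−1} / (k^{2j+3} C(2k, k)) · ∑_{r=0}^{n−j} (−4)^r e_r(k) g_{n−j−r}(k), where e_r(k) = ∑_{1 ≤ j_1 < j_2 < ⋯ < j_r ≤ k−1} (j_1 j_2 ⋯ j_r)^{−2} (with e_0(k) = 1), h_s(k) = ∑_{1 ≤ j_1 ≤ j_2 ≤ ⋯ ≤ j_s ≤ k−1} (j_1 j_2 ⋯ j_s)^{−2} (with h_0(k) = 1), and g_r(k) = ∑_{s=0}^{r} h_s(k) h_{r−s}(k). -/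
/-!
Put the claim into a generating function in `X`. Since
`∑ₙ (2n + 2) Xⁿ / k^(2n+3) = 2k / (k² - X)²` and `∑ⱼ (3j + 5) uʲ = (5 - 2u)/(1 - u)²`, the theorem
is the coefficient of `Xⁿ` in

`∑ₖ 2k/(k² - X)² = ∑ₖ (-1)^(k-1) / (k C(2k,k)) · (5k² - 2X)/(k² - X)² ·`
`  ∏_{m<k} (1 - 4X/m²)/(1 - X/m²)²`.

This identity follows from an explicit WZ pair `wzF`, `wzG` of formal power series with
`wzF n k - wzF (n+1) k = wzG n k - wzG n (k+1)` (lemma `wz`). Here `wzF 0 k` is the `k`-th term on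
the left and `wzG m 0` the `m`-th term on the right (`coeff_wzF`, `coeff_wzG`). Summing over the
square `[0, N)²` leaves the two remainders `∑ₘ wzG m N` and `∑ₖ wzF N k`, whose coefficients tend
to `0` (`tendsto_rem_G`, `tendsto_rem_F`). The estimates use the submultiplicative norm
`∑ |fᵢ| 2⁻ⁱ` (`WB`): the products `∏ (1 - 4X/m²)` and `∏ (1 - X/m²)⁻¹` are bounded in it because
`∑ 1/m²` converges.
-/


/-- `esym r k` is the `r`-th elementary symmetric function of `1/1², …, 1/(k-1)²`:
`e_r(k) = ∑_{1 ≤ j₁ < ⋯ < j_r ≤ k-1} (j₁ ⋯ j_r)⁻²`, with `e_0(k) = 1`. -/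
noncomputable def esym (r k : ℕ) : ℝ :=
  ∑ S ∈ (Finset.range (k - 1)).powersetCard r, ∏ j ∈ S, 1 / ((j : ℝ) + 1) ^ 2

/-- `hsym s k` is the complete homogeneous sum
`h_s(k) = ∑_{1 ≤ j₁ ≤ ⋯ ≤ j_s ≤ k-1} (j₁ ⋯ j_s)⁻²`, with `h_0(k) = 1`. -/
noncomputable def hsym (s k : ℕ) : ℝ :=
  ∑ m ∈ (Finset.range (k - 1)).sym s,
    ((m : Multiset ℕ).map fun j => 1 / ((j : ℝ) + 1) ^ 2).prod

/-- `gsym r k = ∑_{s=0}^{r} h_s(k) h_{r-s}(k)`, the coefficient of `t^r` in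
`∏_{j=1}^{k-1} (1 - t/j²)⁻²`. -/
noncomputable def gsym (r k : ℕ) : ℝ :=
  ∑ s ∈ Finset.range (r + 1), hsym s k * hsym (r - s) k

open PowerSeries Finset

/-! ### Generating functions of the symmetric sums -/

/-- The geometric series `(1 - X/(j+1)²)⁻¹`. -/
noncomputable def geo (j : ℕ) : ℝ⟦X⟧ := PowerSeries.mk fun i => (1 / ((j : ℝ) + 1) ^ 2) ^ i

/-- The linear factor `1 - 4X/(j+1)²`. -/
noncomputable def lin (j : ℕ) : ℝ⟦X⟧ := 1 - C (4 / ((j : ℝ) + 1) ^ 2) * X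

/-- The power series `((j+1)² - X)⁻¹`. -/
noncomputable def gam (j : ℕ) : ℝ⟦X⟧ := C (1 / ((j : ℝ) + 1) ^ 2) * geo j

lemma geo_mul (j : ℕ) : geo j * (1 - C (1 / ((j : ℝ) + 1) ^ 2) * X) = 1 := by
  ext n
  rw [mul_sub, mul_one, ← mul_assoc, map_sub]
  cases n with
  | zero => simp [geo]
  | succ n =>
    rw [coeff_succ_mul_X, coeff_mul_C]
    simp [geo, pow_succ, coeff_one]

lemma gam_mul (j : ℕ) : gam j * (((j : ℝ⟦X⟧) + 1) ^ 2 - X) = 1 := by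
  have h := geo_mul j
  have hj : ((j : ℝ) + 1) ≠ 0 := by positivity
  have h1 : (C (1 / ((j : ℝ) + 1) ^ 2) : ℝ⟦X⟧) * ((j : ℝ⟦X⟧) + 1) ^ 2 = 1 := by
    have : ((j : ℝ⟦X⟧) + 1) = C ((j : ℝ) + 1) := by simp
    rw [this, ← map_pow, ← map_mul]
    rw [one_div, inv_mul_cancel₀ (by positivity), map_one]
  unfold gam
  linear_combination h + geo j * h1

/-- The complete homogeneous sums are generated by `∏ (1 - X/(j+1)²)⁻¹`. -/
lemma coeff_prod_geo (s : Finset ℕ) (n : ℕ) :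
    coeff n (∏ j ∈ s, geo j) =
      ∑ m ∈ s.sym n, ((m : Multiset ℕ).map fun j => 1 / ((j : ℝ) + 1) ^ 2).prod := by
  induction s using Finset.induction generalizing n with
  | empty =>
    cases n with
    | zero => simp [Sym.eq_nil_of_card_zero]
    | succ n => simp [coeff_one]
  | insert i u hi IH =>
    rw [Finset.prod_insert hi, coeff_mul, Finset.Nat.sum_antidiagonal_eq_sum_range_succ_mk]
    rw [← Finset.sum_coe_sort (Finset.sym _ _)]
    rw [← Equiv.sum_comp (Finset.symInsertEquiv hi).symm]
    rw [← Finset.univ_sigma_univ, Finset.sum_sigma, Finset.sum_range]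
    refine Finset.sum_congr rfl fun m _ => ?_
    rw [IH, Finset.mul_sum, ← Finset.sum_coe_sort]
    refine Finset.sum_congr rfl fun p _ => ?_
    simp [geo, Finset.symInsertEquiv_symm_apply_coe, Sym.coe_fill, Sym.coe_replicate, mul_comm]

/-- The elementary symmetric sums are generated by `∏ (1 - 4X/(j+1)²)`, up to powers of `-4`. -/
lemma coeff_prod_lin (s : Finset ℕ) (n : ℕ) :
    coeff n (∏ j ∈ s, lin j) =
      (-4) ^ n * ∑ S ∈ s.powersetCard n, ∏ j ∈ S, 1 / ((j : ℝ) + 1) ^ 2 := by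
  have h : ∏ j ∈ s, lin j = ∏ j ∈ s, (1 + C (-4 * (1 / ((j : ℝ) + 1) ^ 2)) * X) := by
    refine Finset.prod_congr rfl fun j _ => ?_
    rw [lin, neg_mul, map_neg]; ring_nf
  rw [h, Finset.prod_one_add, map_sum, Finset.mul_sum, Finset.powersetCard_eq_filter,
    Finset.sum_filter]
  refine Finset.sum_congr rfl fun S _ => ?_
  rw [Finset.prod_mul_distrib, Finset.prod_const, ← map_prod, coeff_C_mul, coeff_X_pow,
    Finset.prod_mul_distrib, Finset.prod_const]
  split_ifs with h1 h2 h2 <;> simp_all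

lemma coeff_lin (r k : ℕ) : coeff r (∏ j ∈ range k, lin j) = (-4) ^ r * esym r (k + 1) :=
  coeff_prod_lin _ _

lemma coeff_geo_sq (r k : ℕ) : coeff r ((∏ j ∈ range k, geo j) ^ 2) = gsym r (k + 1) := by
  rw [sq, coeff_mul, Finset.Nat.sum_antidiagonal_eq_sum_range_succ_mk]
  simp only [coeff_prod_geo]
  rfl

lemma coeff_lin_geo (r k : ℕ) :
    coeff r ((∏ j ∈ range k, lin j) * (∏ j ∈ range k, geo j) ^ 2) =
      ∑ i ∈ range (r + 1), (-4 : ℝ) ^ i * esym i (k + 1) * gsym (r - i) (k + 1) := by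
  rw [coeff_mul, Finset.Nat.sum_antidiagonal_eq_sum_range_succ_mk]
  simp only [coeff_lin, coeff_geo_sq]

/-! ### The WZ pair -/

/-- The scalar `n!⁶ / (2n)!` normalizing the WZ pair. -/
noncomputable def cst (n : ℕ) : ℝ := (n.factorial : ℝ) ^ 6 / ((2 * n).factorial : ℝ)

/-- First member of the WZ pair. With `K = k + 1` it is
`(-1)ⁿ n!⁶/(2n)! · ∏_{m ≤ n} (1 - 4X/m²) · (n + 2K) / ∏_{j=K}^{K+n} (j² - X)²`. -/
noncomputable def wzF (n k : ℕ) : ℝ⟦X⟧ :=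
  (-1) ^ n * C (cst n) * (∏ i ∈ range n, lin i) * ((n + 2 * k + 2 : ℕ) : ℝ⟦X⟧) *
    (∏ i ∈ range (n + 1), gam (k + i)) ^ 2

/-- Second member of the WZ pair. With `K = k + 1` it is `wzF n k` with the factor `n + 2K`
replaced by `(2K² + (6n + 2)K + 5n² + 4n + 1 - 2X) / (2(2n + 1))`. -/
noncomputable def wzG (n k : ℕ) : ℝ⟦X⟧ :=
  (-1) ^ n * C (cst n / (2 * (2 * n + 1))) * (∏ i ∈ range n, lin i) *
    (((2 * (k + 1) ^ 2 + (6 * n + 2) * (k + 1) + 5 * n ^ 2 + 4 * n + 1 : ℕ) : ℝ⟦X⟧) - 2 * X) *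
    (∏ i ∈ range (n + 1), gam (k + i)) ^ 2

lemma cst_succ (n : ℕ) :
    C (cst (n + 1)) * lin n =
      C (cst n / (2 * (2 * n + 1))) * (((n : ℝ⟦X⟧) + 1) ^ 3 * (((n : ℝ⟦X⟧) + 1) ^ 2 - 4 * X)) := by
  have e : cst (n + 1) = cst n / (2 * (2 * n + 1)) * ((n : ℝ) + 1) ^ 5 := by
    unfold cst
    rw [show 2 * (n + 1) = 2 * n + 1 + 1 by ring]
    simp only [Nat.factorial_succ]
    push_cast
    have := Nat.factorial_pos (2 * n)
    field_simp
    ring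
  have hn : (C ((n : ℝ) + 1) : ℝ⟦X⟧) = (n : ℝ⟦X⟧) + 1 := by simp
  have h1 : (C ((n : ℝ) + 1) : ℝ⟦X⟧) ^ 2 * C (4 / ((n : ℝ) + 1) ^ 2) = 4 := by
    rw [← map_pow, ← map_mul, mul_div_cancel₀ _ (by positivity)]
    exact map_ofNat C 4
  rw [e, map_mul, map_pow, lin, ← hn]
  linear_combination (- C (cst n / (2 * (2 * n + 1))) * C ((n : ℝ) + 1) ^ 3 * X) * h1

/-- The WZ relation. After expressing everything over the common denominator
`∏_{j=K}^{K+n+1} (j² - X)²` it becomes a polynomial identity in `n`, `k` and `X`. -/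
lemma wz (n k : ℕ) : wzF n k - wzF (n + 1) k = wzG n k - wzG n (k + 1) := by
  have hc := cst_succ n
  have h2 : (C (cst n) : ℝ⟦X⟧) =
      C (cst n / (2 * (2 * n + 1))) * (2 * (2 * (n : ℝ⟦X⟧) + 1)) := by
    have : (2 * (2 * (n : ℝ⟦X⟧) + 1)) = C (2 * (2 * (n : ℝ) + 1)) := by
      simp [map_ofNat]
    rw [this, ← map_mul, div_mul_cancel₀ _ (by positivity)]
  have ha := gam_mul k
  have hb := gam_mul (k + (n + 1))
  have p1 : ∏ i ∈ range (n + 1), gam (k + i) = gam k * ∏ i ∈ range n, gam (k + 1 + i) := by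
    rw [Finset.prod_range_succ', mul_comm]
    congr 1
    exact Finset.prod_congr rfl fun i _ => by congr 1; ring
  have p2 : ∏ i ∈ range (n + 1), gam (k + 1 + i) =
      (∏ i ∈ range n, gam (k + 1 + i)) * gam (k + (n + 1)) := by
    rw [Finset.prod_range_succ]; congr 2; ring
  have p3 : ∏ i ∈ range (n + 1 + 1), gam (k + i) =
      gam k * (∏ i ∈ range n, gam (k + 1 + i)) * gam (k + (n + 1)) := by
    rw [Finset.prod_range_succ, p1]
  unfold wzF wzG
  rw [p1, p2, p3, h2, Finset.prod_range_succ _ n]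
  have hb2 : gam (k + (n + 1)) ^ 2 * (((k : ℝ⟦X⟧) + (n : ℝ⟦X⟧) + 2) ^ 2 - X) ^ 2 = 1 := by
    rw [← mul_pow]
    push_cast at hb
    rw [show ((k : ℝ⟦X⟧) + (n : ℝ⟦X⟧) + 2) = (k : ℝ⟦X⟧) + ((n : ℝ⟦X⟧) + 1) + 1 by ring, hb, one_pow]
  have ha2 : gam k ^ 2 * (((k : ℝ⟦X⟧) + 1) ^ 2 - X) ^ 2 = 1 := by
    rw [← mul_pow, ha, one_pow]
  generalize C (cst n / (2 * (2 * (n : ℝ) + 1))) = c at *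
  generalize C (cst (n + 1)) = c' at *
  generalize (∏ x ∈ range n, lin x) = E at *
  generalize (∏ i ∈ range n, gam (k + 1 + i)) = W at *
  generalize gam (k + (n + 1)) = h at *
  generalize gam k = g at *
  generalize lin n = l at *
  push_cast
  generalize (n : ℝ⟦X⟧) = N at *
  generalize (k : ℝ⟦X⟧) = K at *
  linear_combination ((-1) ^ n * E * (N + 1 + 2 * K + 2) * (g * W * h) ^ 2) * hc
    - ((-1) ^ n * c * E * W ^ 2 * g ^ 2 * (2 * (2 * N + 1) * (N + 2 * K + 2) -
      (2 * (K + 1) ^ 2 + (6 * N + 2) * (K + 1) + 5 * N ^ 2 + 4 * N + 1 - 2 * X))) * hb2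
    - ((-1) ^ n * c * E * W ^ 2 * h ^ 2 *
      (2 * (K + 1 + 1) ^ 2 + (6 * N + 2) * (K + 1 + 1) + 5 * N ^ 2 + 4 * N + 1 - 2 * X)) * ha2

/-! ### A weighted `ℓ¹` bound on power series -/

/-- `WB f c` says that the weighted `ℓ¹` norm `∑ |fᵢ| 2⁻ⁱ` of the coefficients of `f` is at most
`c`; it is phrased through partial sums, so that finiteness of the norm is part of the claim. -/
def WB (f : ℝ⟦X⟧) (c : ℝ) : Prop :=
  ∀ N : ℕ, ∑ i ∈ range N, |coeff i f| * (1 / 2) ^ i ≤ c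

lemma WB.nonneg {f : ℝ⟦X⟧} {c : ℝ} (h : WB f c) : 0 ≤ c := by simpa using h 0

lemma WB.mono {f : ℝ⟦X⟧} {c d : ℝ} (h : WB f c) (hcd : c ≤ d) : WB f d :=
  fun N => (h N).trans hcd

lemma WB.coeff_le {f : ℝ⟦X⟧} {c : ℝ} (h : WB f c) (n : ℕ) : |coeff n f| ≤ 2 ^ n * c := by
  have h1 : |coeff n f| * (1 / 2) ^ n ≤ c :=
    (Finset.single_le_sum (f := fun i => |coeff i f| * (1 / 2 : ℝ) ^ i)
      (fun i _ => by positivity) (Finset.self_mem_range_succ n)).trans (h (n + 1))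
  calc |coeff n f| = 2 ^ n * (|coeff n f| * (1 / 2) ^ n) := by
        rw [mul_left_comm, ← mul_pow]; norm_num
    _ ≤ _ := by gcongr

/-- Submultiplicativity of the weighted norm: the triangle `i + j < N` sits in the square
`i, j < N`. -/
lemma WB.mul {f g : ℝ⟦X⟧} {c d : ℝ} (hf : WB f c) (hg : WB g d) : WB (f * g) (c * d) := by
  intro N
  calc ∑ i ∈ range N, |coeff i (f * g)| * (1 / 2) ^ i
      ≤ ∑ i ∈ range N, ∑ p ∈ antidiagonal i,
          (|coeff p.1 f| * (1 / 2) ^ p.1) * (|coeff p.2 g| * (1 / 2) ^ p.2) := by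
        refine Finset.sum_le_sum fun i _ => ?_
        rw [coeff_mul]
        calc _ ≤ (∑ p ∈ antidiagonal i, |coeff p.1 f * coeff p.2 g|) * (1 / 2) ^ i := by
              gcongr; exact Finset.abs_sum_le_sum_abs _ _
          _ = _ := by
              rw [Finset.sum_mul]
              refine Finset.sum_congr rfl fun p hp => ?_
              rw [← HasAntidiagonal.mem_antidiagonal.1 hp, abs_mul, pow_add]; ring
    _ ≤ ∑ p ∈ range N ×ˢ range N,
          (|coeff p.1 f| * (1 / 2) ^ p.1) * (|coeff p.2 g| * (1 / 2) ^ p.2) := by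
        rw [← Finset.sum_biUnion]
        · refine Finset.sum_le_sum_of_subset_of_nonneg ?_ fun _ _ _ => by positivity
          intro p hp
          simp only [mem_biUnion, mem_range, HasAntidiagonal.mem_antidiagonal, mem_product] at hp ⊢
          obtain ⟨a, ha, hpa⟩ := hp
          omega
        · intro i _ j _ hij
          rw [Function.onFun, Finset.disjoint_left]
          intro p hp hp'
          simp only [HasAntidiagonal.mem_antidiagonal] at hp hp'
          omega
    _ = (∑ i ∈ range N, |coeff i f| * (1 / 2) ^ i) * ∑ i ∈ range N, |coeff i g| * (1 / 2) ^ i := by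
        rw [Finset.sum_mul_sum, Finset.sum_product]
    _ ≤ c * d := mul_le_mul (hf N) (hg N) (Finset.sum_nonneg fun _ _ => by positivity) hf.nonneg

lemma WB.add {f g : ℝ⟦X⟧} {c d : ℝ} (hf : WB f c) (hg : WB g d) : WB (f + g) (c + d) := by
  intro N
  refine le_trans ?_ (add_le_add (hf N) (hg N))
  rw [← Finset.sum_add_distrib]
  refine Finset.sum_le_sum fun i _ => ?_
  rw [← add_mul, map_add]
  gcongr
  exact abs_add_le _ _

lemma WB.neg {f : ℝ⟦X⟧} {c : ℝ} (hf : WB f c) : WB (-f) c := by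
  intro N
  simpa using hf N

lemma WB.sub {f g : ℝ⟦X⟧} {c d : ℝ} (hf : WB f c) (hg : WB g d) : WB (f - g) (c + d) := by
  rw [sub_eq_add_neg]; exact hf.add hg.neg

lemma WB.const (a : ℝ) : WB (C a) |a| := by
  intro N
  cases N with
  | zero => simp
  | succ N => rw [Finset.sum_range_succ']; simp [coeff_C]

lemma WB.one : WB 1 1 := by simpa using WB.const 1

lemma WB.natCast (n : ℕ) : WB (n : ℝ⟦X⟧) n := by simpa using WB.const (n : ℝ)

lemma WB.X : WB (X : ℝ⟦X⟧) (1 / 2) := by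
  intro N
  have : ∀ i, |coeff i (PowerSeries.X : ℝ⟦X⟧)| * (1 / 2) ^ i = if i = 1 then (1 / 2 : ℝ) else 0 := by
    intro i; rw [coeff_X]; split_ifs with h <;> simp [h]
  simp only [this, Finset.sum_ite_eq']
  split_ifs <;> norm_num

lemma WB.prod {ι : Type*} (s : Finset ι) {f : ι → ℝ⟦X⟧} {c : ι → ℝ} (h : ∀ i ∈ s, WB (f i) (c i)) :
    WB (∏ i ∈ s, f i) (∏ i ∈ s, c i) := by
  classical
  induction s using Finset.induction with
  | empty => simpa using WB.one
  | insert a s ha ih =>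
    rw [Finset.prod_insert ha, Finset.prod_insert ha]
    exact (h a (by simp)).mul (ih fun i hi => h i (by simp [hi]))

lemma WB.sq {f : ℝ⟦X⟧} {c : ℝ} (h : WB f c) : WB (f ^ 2) (c ^ 2) := by
  rw [pow_two, pow_two]; exact h.mul h

lemma WB.neg_one_pow (n : ℕ) : WB ((-1) ^ n) 1 := by
  rcases neg_one_pow_eq_or ℝ⟦X⟧ n with h | h <;> rw [h]
  exacts [WB.one, WB.one.neg]

/-! ### Remainder estimates -/

lemma wb_geo (j : ℕ) : WB (geo j) (1 + 2 / ((j : ℝ) + 1) ^ 2) := by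
  intro N
  have ha : (1 : ℝ) ≤ ((j : ℝ) + 1) ^ 2 := by nlinarith [(Nat.cast_nonneg j : (0 : ℝ) ≤ j)]
  set a : ℝ := 1 / ((j : ℝ) + 1) ^ 2 with hadef
  have ha0 : 0 ≤ a := by positivity
  have ha1 : a ≤ 1 := by rw [hadef, div_le_one (by positivity)]; exact ha
  have h1 : ∀ i, |coeff i (geo j)| * (1 / 2 : ℝ) ^ i = (a / 2) ^ i := by
    intro i
    rw [geo, coeff_mk, ← hadef, abs_of_nonneg (by positivity), ← mul_pow]; ring_nf
  simp only [h1]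
  have h2 : (∑ i ∈ range N, (a / 2) ^ i) * (1 - a / 2) ≤ 1 := by
    rw [geom_sum_mul_neg]
    have : 0 ≤ (a / 2) ^ N := by positivity
    linarith
  rw [show 2 / ((j : ℝ) + 1) ^ 2 = 2 * a by rw [hadef]; ring]
  have h3 : 0 < 1 - a / 2 := by linarith
  refine le_of_mul_le_mul_right (h2.trans ?_) h3
  nlinarith

lemma wb_lin (j : ℕ) : WB (lin j) (1 + 2 / ((j : ℝ) + 1) ^ 2) := by
  have := WB.one.sub ((WB.const (4 / ((j : ℝ) + 1) ^ 2)).mul WB.X)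
  refine WB.mono this ?_
  rw [abs_of_nonneg (by positivity)]
  apply le_of_eq; ring

/-- The partial products of `∏ (1 + 2/(j+1)²)` are bounded. -/
lemma exists_prod_bound :
    ∃ A : ℝ, 1 ≤ A ∧ ∀ s : Finset ℕ, ∏ j ∈ s, (1 + 2 / ((j : ℝ) + 1) ^ 2) ≤ A := by
  have hs : Summable fun j : ℕ => 2 / ((j : ℝ) + 1) ^ 2 := by
    have := (summable_nat_add_iff 1).2 (Real.summable_one_div_nat_pow.2 (by norm_num : 1 < 2))
    refine (this.mul_left 2).congr fun j => ?_
    push_cast; ring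
  refine ⟨Real.exp (∑' j : ℕ, 2 / ((j : ℝ) + 1) ^ 2), ?_, fun s => ?_⟩
  · exact Real.one_le_exp (tsum_nonneg fun j => by positivity)
  · refine (Real.prod_one_add_le_exp_sum s fun j => by positivity).trans ?_
    exact Real.exp_le_exp.2 (hs.sum_le_tsum s fun j _ => by positivity)

lemma prod_inv_le (n k : ℕ) :
    ∏ i ∈ range (n + 1), 1 / (((k + i : ℕ) : ℝ) + 1) ≤ 1 / (((k : ℝ) + 1) * n.factorial) := by
  induction n with
  | zero => simp
  | succ n ih =>
    rw [Finset.prod_range_succ]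
    calc _ ≤ 1 / (((k : ℝ) + 1) * n.factorial) * (1 / ((n : ℝ) + 1)) := by
          gcongr; linarith [(Nat.cast_nonneg k : (0 : ℝ) ≤ k)]
      _ = _ := by rw [Nat.factorial_succ]; push_cast; field_simp

lemma cst_eq (n : ℕ) : cst n = (n.factorial : ℝ) ^ 4 / n.centralBinom := by
  have h : (n.centralBinom : ℝ) * (n.factorial : ℝ) ^ 2 = (2 * n).factorial := by
    have := Nat.choose_mul_factorial_mul_factorial (show n ≤ 2 * n by omega)
    rw [show 2 * n - n = n by omega] at this
    rw [← this, Nat.centralBinom]; push_cast; ring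
  have h1 := n.centralBinom_pos
  have h2 := n.factorial_pos
  rw [cst, ← h]
  field_simp

lemma two_pow_le_centralBinom (n : ℕ) : 2 ^ n ≤ n.centralBinom := by
  induction n with
  | zero => simp
  | succ n ih =>
    have h := Nat.succ_mul_centralBinom_succ n
    rw [pow_succ]
    nlinarith

/-- Bound for the shape shared by `wzF` and `wzG`. All the products of `lin` and `geo` factors are
bounded uniformly, and the remaining scalars are at most
`n!⁴ / C(2n, n) * (1 / ((k + 1) n!))⁴`. -/
lemma exists_common_bound :
    ∃ A : ℝ, 0 ≤ A ∧ ∀ n k : ℕ, ∀ c : ℝ, 0 ≤ c → c ≤ cst n → ∀ f : ℝ⟦X⟧, ∀ d : ℝ, WB f d →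
      WB ((-1) ^ n * C c * (∏ i ∈ range n, lin i) * f * (∏ i ∈ range (n + 1), gam (k + i)) ^ 2)
        (A * (d / (((k : ℝ) + 1) ^ 4 * n.centralBinom))) := by
  obtain ⟨A, hA, hp⟩ := exists_prod_bound
  refine ⟨A ^ 3, by positivity, fun n k c hc0 hc f d hf => ?_⟩
  have h1 : WB (∏ i ∈ range n, lin i) A := (WB.prod _ fun i _ => wb_lin i).mono (hp _)
  have h2 : WB (∏ i ∈ range (n + 1), gam (k + i)) ((1 / (((k : ℝ) + 1) * n.factorial)) ^ 2 * A) := by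
    simp only [gam, Finset.prod_mul_distrib]
    refine WB.mul ?_ ?_
    · rw [← map_prod]
      refine (WB.const _).mono ?_
      rw [abs_of_nonneg (Finset.prod_nonneg fun _ _ => by positivity)]
      have := prod_inv_le n k
      calc _ = (∏ i ∈ range (n + 1), 1 / (((k + i : ℕ) : ℝ) + 1)) ^ 2 := by
            rw [← Finset.prod_pow]; simp
        _ ≤ _ := by gcongr
    · refine (WB.prod _ fun i _ => wb_geo (k + i)).mono ?_
      have := hp ((range (n + 1)).map (addLeftEmbedding k))
      rwa [Finset.prod_map] at this
  have h3 : WB (C c) (cst n) := (WB.const c).mono (by rwa [abs_of_nonneg hc0])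
  refine WB.mono (((((WB.neg_one_pow n).mul h3).mul h1).mul hf).mul h2.sq) ?_
  apply le_of_eq
  rw [cst_eq]
  have h1 := n.centralBinom_pos
  have h2 := n.factorial_pos
  field_simp

lemma exists_bound_F (p : ℕ) : ∃ A : ℝ, 0 ≤ A ∧ ∀ n k : ℕ, k < n →
    |coeff p (wzF n k)| ≤ A * (n / 2 ^ n) := by
  obtain ⟨A, hA, h⟩ := exists_common_bound
  refine ⟨2 ^ p * (A * 5), by positivity, fun n k hk => ?_⟩
  have h1 := (h n k (cst n) (by unfold cst; positivity) le_rfl _ _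
    (WB.natCast (n + 2 * k + 2))).coeff_le p
  refine h1.trans ?_
  rw [mul_assoc, mul_assoc]
  have h2 : (2 : ℝ) ^ n ≤ n.centralBinom := by exact_mod_cast two_pow_le_centralBinom n
  have h3 : ((n + 2 * k + 2 : ℕ) : ℝ) ≤ 5 * n := by
    have : n + 2 * k + 2 ≤ 5 * n := by omega
    exact_mod_cast this
  have h4 : (1 : ℝ) ≤ ((k : ℝ) + 1) ^ 4 := one_le_pow₀ (by linarith [(Nat.cast_nonneg k : (0 : ℝ) ≤ k)])
  have h5 : (2 : ℝ) ^ n ≤ ((k : ℝ) + 1) ^ 4 * n.centralBinom := by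
    nlinarith [pow_pos (zero_lt_two (α := ℝ)) n]
  gcongr
  rw [← mul_div_assoc]
  gcongr

lemma exists_bound_G (p : ℕ) : ∃ A : ℝ, 0 ≤ A ∧ ∀ n k : ℕ, n < k →
    |coeff p (wzG n k)| ≤ A / ((k : ℝ) + 1) ^ 2 := by
  obtain ⟨A, hA, h⟩ := exists_common_bound
  refine ⟨2 ^ p * (A * 20), by positivity, fun n k hk => ?_⟩
  have hc : 0 ≤ cst n := by unfold cst; positivity
  have h2X : WB (2 * X : ℝ⟦X⟧) 1 := by
    have := (WB.natCast 2).mul WB.X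
    simpa using this
  have h1 := (h n k (cst n / (2 * (2 * n + 1))) (by positivity)
    (div_le_self hc (by linarith [(Nat.cast_nonneg n : (0 : ℝ) ≤ n)])) _ _
    ((WB.natCast (2 * (k + 1) ^ 2 + (6 * n + 2) * (k + 1) + 5 * n ^ 2 + 4 * n + 1)).sub
      h2X)).coeff_le p
  refine h1.trans ?_
  rw [mul_div_assoc, mul_div_assoc]
  have h2 : (1 : ℝ) ≤ n.centralBinom := by exact_mod_cast n.centralBinom_pos
  have h3 : ((2 * (k + 1) ^ 2 + (6 * n + 2) * (k + 1) + 5 * n ^ 2 + 4 * n + 1 : ℕ) : ℝ) + 1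
      ≤ 20 * ((k : ℝ) + 1) ^ 2 := by
    have hn : (n : ℝ) ≤ k := by exact_mod_cast hk.le
    have hn0 : (0 : ℝ) ≤ n := by positivity
    push_cast
    nlinarith
  have h5 : ((k : ℝ) + 1) ^ 4 ≤ ((k : ℝ) + 1) ^ 4 * n.centralBinom :=
    le_mul_of_one_le_right (by positivity) h2
  refine mul_le_mul_of_nonneg_left (mul_le_mul_of_nonneg_left ?_ hA) (by positivity)
  calc _ ≤ (20 * ((k : ℝ) + 1) ^ 2) / ((k : ℝ) + 1) ^ 4 := by gcongr
    _ = _ := by field_simp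

/-- The WZ relation summed over the rectangle `k < M`, `m < N`. -/
lemma wz_sum (M N : ℕ) :
    ∑ k ∈ range M, wzF 0 k =
      ∑ m ∈ range N, wzG m 0 - ∑ m ∈ range N, wzG m M + ∑ k ∈ range M, wzF N k := by
  induction N with
  | zero => simp
  | succ N ih =>
    have h : ∑ k ∈ range M, wzF N k - ∑ k ∈ range M, wzF (N + 1) k = wzG N 0 - wzG N M := by
      rw [← Finset.sum_sub_distrib, ← Finset.sum_range_sub']
      exact Finset.sum_congr rfl fun k _ => wz N k
    rw [Finset.sum_range_succ, Finset.sum_range_succ]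
    linear_combination ih + h

/-! ### Coefficients on the boundary of the rectangle -/

lemma coeff_single_geo_sq (p k : ℕ) :
    coeff p (geo k ^ 2) = (p + 1) * (1 / ((k : ℝ) + 1) ^ 2) ^ p := by
  rw [sq, coeff_mul]
  simp only [geo, coeff_mk, ← pow_add]
  rw [Finset.sum_congr rfl fun x hx =>
    congrArg ((1 / ((k : ℝ) + 1) ^ 2) ^ ·) (HasAntidiagonal.mem_antidiagonal.1 hx)]
  simp

lemma coeff_wzF (p k : ℕ) :
    coeff p (wzF 0 k) = (2 * (p : ℝ) + 2) * (1 / ((k : ℝ) + 1) ^ (2 * p + 3)) := by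
  have h := coeff_single_geo_sq p k
  have e : wzF 0 k = C ((2 * (k : ℝ) + 2) * (1 / ((k : ℝ) + 1) ^ 2) ^ 2) * geo k ^ 2 := by
    have : ((2 * k + 2 : ℕ) : ℝ⟦X⟧) = C (2 * (k : ℝ) + 2) := by simp [map_ofNat]
    simp only [wzF, gam, cst, zero_add, this, map_mul, map_pow]
    simp
    ring
  rw [e, coeff_C_mul, h, div_pow, ← pow_mul, div_pow, ← pow_mul]
  field_simp
  ring

/-- With `u = X/(m+1)²` this is `(5 - 2u)/(1 - u)² = ∑ (3j + 5) uʲ`, up to the scalar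
`1/(m+1)²`; the polynomial on the left equals `5(m+1)² - 2X`. -/
lemma factor_eq (m : ℕ) :
    (((2 * (0 + 1) ^ 2 + (6 * m + 2) * (0 + 1) + 5 * m ^ 2 + 4 * m + 1 : ℕ) : ℝ⟦X⟧) - 2 * X) *
      gam m ^ 2 = C (1 / ((m : ℝ) + 1) ^ 2) *
        PowerSeries.mk fun j => (3 * (j : ℝ) + 5) * (1 / ((m : ℝ) + 1) ^ 2) ^ j := by
  have e : (((2 * (0 + 1) ^ 2 + (6 * m + 2) * (0 + 1) + 5 * m ^ 2 + 4 * m + 1 : ℕ) : ℝ⟦X⟧)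
      - 2 * X) * gam m ^ 2 =
      C (5 * ((m : ℝ) + 1) ^ 2 * (1 / ((m : ℝ) + 1) ^ 2) ^ 2) * geo m ^ 2 -
        C (2 * (1 / ((m : ℝ) + 1) ^ 2) ^ 2) * (geo m ^ 2 * X) := by
    simp only [gam, map_mul, map_pow, map_add, map_natCast, map_one, map_ofNat]
    push_cast
    ring
  rw [e]
  ext j
  rw [map_sub, coeff_C_mul, coeff_C_mul, coeff_C_mul, coeff_mk, coeff_single_geo_sq]
  cases j with
  | zero => simp; field_simp
  | succ j =>
    rw [coeff_succ_mul_X, coeff_single_geo_sq, pow_succ _ j]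
    push_cast
    generalize (1 / ((m : ℝ) + 1) ^ 2) ^ j = z
    field_simp
    ring

lemma prod_gam (m : ℕ) :
    ∏ i ∈ range m, gam i = C (1 / (m.factorial : ℝ) ^ 2) * ∏ i ∈ range m, geo i := by
  simp only [gam, Finset.prod_mul_distrib]
  rw [← map_prod]
  congr 2
  induction m with
  | zero => simp
  | succ m ih => rw [Finset.prod_range_succ, ih, Nat.factorial_succ]; push_cast; field_simp

lemma coeff_wzG (p m : ℕ) :
    coeff p (wzG m 0) = ∑ j ∈ range (p + 1), (3 * (j : ℝ) + 5) *
      (((-1 : ℝ) ^ m / (((m : ℝ) + 1) ^ (2 * j + 3) * (Nat.choose (2 * (m + 1)) (m + 1) : ℝ))) *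
        ∑ r ∈ range (p - j + 1), (-4 : ℝ) ^ r * esym r (m + 1) * gsym (p - j - r) (m + 1)) := by
  have e : wzG m 0 = C ((-1) ^ m / (((m : ℝ) + 1) ^ 3 * (Nat.choose (2 * (m + 1)) (m + 1) : ℝ))) *
      ((PowerSeries.mk fun j => (3 * (j : ℝ) + 5) * (1 / ((m : ℝ) + 1) ^ 2) ^ j) *
        ((∏ j ∈ range m, lin j) * (∏ j ∈ range m, geo j) ^ 2)) := by
    have hc : (-1) ^ m / (((m : ℝ) + 1) ^ 3 * (Nat.choose (2 * (m + 1)) (m + 1) : ℝ)) =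
        (-1) ^ m * (cst m / (2 * (2 * m + 1))) * (1 / (m.factorial : ℝ) ^ 2) ^ 2 *
          (1 / ((m : ℝ) + 1) ^ 2) := by
      have h : ((m : ℝ) + 1) * (m + 1).centralBinom = 2 * (2 * m + 1) * m.centralBinom := by
        exact_mod_cast Nat.succ_mul_centralBinom_succ m
      have h0 := (m + 1).centralBinom_pos
      have h1 := m.centralBinom_pos
      have h2 := m.factorial_pos
      rw [cst_eq, ← Nat.centralBinom]
      field_simp
      linear_combination -h
    have h1 := factor_eq m
    have h2 := prod_gam m
    rw [hc, wzG, Finset.prod_range_succ]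
    simp only [zero_add] at *
    rw [h2]
    simp only [map_mul, map_pow, map_neg, map_one] at *
    linear_combination ((-1) ^ m * C (cst m / (2 * (2 * m + 1))) * (∏ i ∈ range m, lin i) *
      (C (1 / (m.factorial : ℝ) ^ 2) * ∏ i ∈ range m, geo i) ^ 2) * h1
  rw [e, coeff_C_mul, coeff_mul, Finset.Nat.sum_antidiagonal_eq_sum_range_succ_mk, Finset.mul_sum]
  refine Finset.sum_congr rfl fun j _ => ?_
  rw [coeff_lin_geo, coeff_mk, div_pow, ← pow_mul, pow_add]
  simp only [one_pow]
  field_simp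

lemma summable_term (p j : ℕ) : Summable fun m : ℕ =>
    ((-1 : ℝ) ^ m / (((m : ℝ) + 1) ^ (2 * j + 3) * (Nat.choose (2 * (m + 1)) (m + 1) : ℝ))) *
        ∑ r ∈ range (p - j + 1), (-4 : ℝ) ^ r * esym r (m + 1) * gsym (p - j - r) (m + 1) := by
  obtain ⟨A, hA, hp⟩ := exists_prod_bound
  have hs : Summable fun m : ℕ => 1 / ((m : ℝ) + 1) ^ 2 := by
    have := (summable_nat_add_iff 1).2 (Real.summable_one_div_nat_pow.2 (by norm_num : 1 < 2))
    exact_mod_cast this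
  refine Summable.of_norm_bounded (hs.mul_right (2 ^ (p - j) * (A * A ^ 2))) fun m => ?_
  rw [← coeff_lin_geo, norm_mul, Real.norm_eq_abs, Real.norm_eq_abs]
  have h1 : WB (∏ i ∈ range m, lin i) A := (WB.prod _ fun i _ => wb_lin i).mono (hp _)
  have h2 : WB (∏ i ∈ range m, geo i) A := (WB.prod _ fun i _ => wb_geo i).mono (hp _)
  refine mul_le_mul ?_ ((h1.mul h2.sq).coeff_le _) (abs_nonneg _) (by positivity)
  rw [abs_div, abs_pow, abs_neg, abs_one, one_pow, abs_of_nonneg (by positivity)]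
  have h3 : (1 : ℝ) ≤ (Nat.choose (2 * (m + 1)) (m + 1) : ℝ) := by
    exact_mod_cast (m + 1).centralBinom_pos
  have h4 : (1 : ℝ) ≤ (m : ℝ) + 1 := by linarith [(Nat.cast_nonneg m : (0 : ℝ) ≤ m)]
  gcongr
  calc ((m : ℝ) + 1) ^ 2 ≤ ((m : ℝ) + 1) ^ (2 * j + 3) := pow_le_pow_right₀ h4 (by omega)
    _ ≤ _ := le_mul_of_one_le_right (by positivity) h3

/-! ### Passage to the limit -/

open Filter Topology in
lemma tendsto_rem_G (p : ℕ) :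
    Tendsto (fun N => ∑ m ∈ range N, coeff p (wzG m N)) atTop (𝓝 0) := by
  obtain ⟨A, hA, h⟩ := exists_bound_G p
  have h0 : Tendsto (fun N : ℕ => A * (1 / ((N : ℝ) + 1))) atTop (𝓝 0) := by
    simpa using tendsto_one_div_add_atTop_nhds_zero_nat.const_mul A
  refine squeeze_zero_norm (fun N => ?_) h0
  refine (norm_sum_le _ _).trans ?_
  calc _ ≤ ∑ m ∈ range N, A / ((N : ℝ) + 1) ^ 2 :=
        Finset.sum_le_sum fun m hm => h m N (Finset.mem_range.1 hm)
    _ = A * (N / ((N : ℝ) + 1) ^ 2) := by simp; ring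
    _ ≤ A * (1 / ((N : ℝ) + 1)) := by
        refine mul_le_mul_of_nonneg_left ?_ hA
        rw [div_le_div_iff₀ (by positivity) (by positivity)]
        nlinarith [(Nat.cast_nonneg N : (0 : ℝ) ≤ N)]

open Filter Topology in
lemma tendsto_rem_F (p : ℕ) :
    Tendsto (fun N => ∑ k ∈ range N, coeff p (wzF N k)) atTop (𝓝 0) := by
  obtain ⟨A, hA, h⟩ := exists_bound_F p
  have h0 : Tendsto (fun N : ℕ => A * ((N : ℝ) ^ 2 / 2 ^ N)) atTop (𝓝 0) := by
    simpa using (tendsto_pow_const_div_const_pow_of_one_lt 2 (one_lt_two (α := ℝ))).const_mul A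
  refine squeeze_zero_norm (fun N => ?_) h0
  refine (norm_sum_le _ _).trans ?_
  calc _ ≤ ∑ m ∈ range N, A * ((N : ℝ) / 2 ^ N) :=
        Finset.sum_le_sum fun m hm => h N m (Finset.mem_range.1 hm)
    _ = _ := by simp; ring

theorem stmt4 (n : ℕ) :
    (∑' k : ℕ, 1 / ((k : ℝ) + 1) ^ (2 * n + 3))
      = (1 / (2 * (n : ℝ) + 2)) *
          ∑ j ∈ Finset.range (n + 1), (3 * (j : ℝ) + 5) *
            ∑' k : ℕ,
              ((-1 : ℝ) ^ k /
                  (((k : ℝ) + 1) ^ (2 * j + 3) *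
                    (Nat.choose (2 * (k + 1)) (k + 1) : ℝ))) *
                ∑ r ∈ Finset.range (n - j + 1),
                  (-4 : ℝ) ^ r * esym r (k + 1) * gsym (n - j - r) (k + 1) := by
  have hR : HasSum (fun m => coeff n (wzG m 0)) (∑ j ∈ Finset.range (n + 1), (3 * (j : ℝ) + 5) *
            ∑' k : ℕ,
              ((-1 : ℝ) ^ k /
                  (((k : ℝ) + 1) ^ (2 * j + 3) *
                    (Nat.choose (2 * (k + 1)) (k + 1) : ℝ))) *
                ∑ r ∈ Finset.range (n - j + 1),
                  (-4 : ℝ) ^ r * esym r (k + 1) * gsym (n - j - r) (k + 1)) := by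
    simp only [coeff_wzG]
    exact hasSum_sum fun j _ => (summable_term n j).hasSum.mul_left _
  have hs : Summable fun k : ℕ => 1 / ((k : ℝ) + 1) ^ (2 * n + 3) := by
    have := (summable_nat_add_iff 1).2
      (Real.summable_one_div_nat_pow.2 (by omega : 1 < 2 * n + 3))
    exact_mod_cast this
  have hL : HasSum (fun k => coeff n (wzF 0 k))
      ((2 * (n : ℝ) + 2) * ∑' k : ℕ, 1 / ((k : ℝ) + 1) ^ (2 * n + 3)) := by
    simp only [coeff_wzF]
    exact hs.hasSum.mul_left _
  have hlim := (hR.tendsto_sum_nat.sub (tendsto_rem_G n)).add (tendsto_rem_F n)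
  have key := tendsto_nhds_unique hL.tendsto_sum_nat (hlim.congr fun N => by
    simpa using (congrArg (coeff n) (wz_sum N N)).symm)
  rw [sub_zero, add_zero] at key
  rw [← key]
  field_simp
end

section
/- Let a be a complex number which is not a nonzero integer. Then ∑_{n=1}^∞ (−1)^{n−1}/(n² − a²) = (1/4) ∑_{n=1}^∞ (−1)^{n−1} (10n² − 3n − a²) / (n (2n−1) (n² − a²) C(2n, n) · ∏_{j=1}^{n} (1 − a²/(n+j)²)). -/
/-!
The identity comes from a WZ pair. Write `b = a ^ 2`. The kernel

`F n k = (-1)^(n+k) n! (2n+k)! (3n+2k+2) / (2 (n+k+1)! ∏_{m=n+k+1}^{2n+k+1} (m² - b))`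

has a companion `G`, a rational multiple of `F`, such that
`F n k - F (n+1) k = G n k - G n (k+1)` (`WZ.wz`). On the boundary, `F 0 k` is the `k`-th term of the
left-hand series and `G n 0` is a quarter of the `n`-th term of the right-hand series
(`WZ.F_zero`, `WZ.G_zero`). Summing the relation over the square `n, k < L` gives
`∑_{k<L} F 0 k - ∑_{k<L} F L k = ∑_{n<L} G n 0 - ∑_{n<L} G n L`.

For `m` large, `|m² - b| ≥ m²/2`; together with `2^n n! (n+k)! ≤ (2n+k)!` this yields
`‖F n k‖ ≤ 3/(2n+k+1)²` and `‖G n k‖ ≤ 12/(2n+k+1)²` whenever `n + k` is large. Hence both boundary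
series converge absolutely, and the sums along the two far sides of the square are `O(1/L)`.
-/

open Finset Filter Topology

namespace WZ

/-- The product `∏_{m=s}^{s+r-1} (m² - b)`. -/
noncomputable def P (b : ℂ) (s r : ℕ) : ℂ := ∏ i ∈ range r, (((s : ℂ) + i) ^ 2 - b)

/-- The WZ kernel. -/
noncomputable def F (b : ℂ) (n k : ℕ) : ℂ :=
  (-1) ^ (n + k) * (n.factorial * (2 * n + k).factorial * (3 * n + 2 * k + 2)
    / (2 * (n + k + 1).factorial)) / P b (n + k + 1) (n + 1)

/-- The WZ companion of `F`, written as `F` times its rational certificate. -/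
noncomputable def G (b : ℂ) (n k : ℕ) : ℂ :=
  F b n k * (1 - (2 * n + k + 1) / (3 * n + 2 * k + 2) *
    ((((n : ℂ) + k + 1) ^ 2 - b) / ((2 * (n : ℂ) + k + 2) ^ 2 - b)))

lemma P_succ (b : ℂ) (s r : ℕ) : P b s (r + 1) = P b s r * (((s : ℂ) + r) ^ 2 - b) := by
  simp [P, prod_range_succ]

lemma P_succ' (b : ℂ) (s r : ℕ) : P b s (r + 1) = ((s : ℂ) ^ 2 - b) * P b (s + 1) r := by
  simp only [P, prod_range_succ']
  rw [mul_comm]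
  congr 1
  · simp
  · refine prod_congr rfl fun i _ => ?_
    push_cast
    ring

lemma P_ne {b : ℂ} (hb : ∀ m : ℕ, m ≠ 0 → (m : ℂ) ^ 2 - b ≠ 0) (s r : ℕ) :
    P b (s + 1) r ≠ 0 := by
  refine prod_ne_zero_iff.2 fun i _ => ?_
  have := hb (s + 1 + i) (by omega)
  push_cast at this ⊢
  exact this

lemma F_succ_left {b : ℂ} (hb : ∀ m : ℕ, m ≠ 0 → (m : ℂ) ^ 2 - b ≠ 0) (n k : ℕ) :
    F b (n + 1) k = -F b n k * ((n + 1) * (2 * n + k + 1) * (2 * n + k + 2) * (3 * n + 2 * k + 5)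
      / ((3 * n + 2 * k + 2) * (n + k + 2))) * ((((n : ℂ) + k + 1) ^ 2 - b) /
      (((2 * (n : ℂ) + k + 2) ^ 2 - b) * ((2 * (n : ℂ) + k + 3) ^ 2 - b))) := by
  have hA := hb (n + k + 1) (by omega)
  have hB := hb (2 * n + k + 2) (by omega)
  have hC := hb (2 * n + k + 3) (by omega)
  have h1 : (3 * n + 2 * k + 2 : ℂ) ≠ 0 := by exact_mod_cast (by omega : 3 * n + 2 * k + 2 ≠ 0)
  have h2 : (n + k + 2 : ℂ) ≠ 0 := by exact_mod_cast (by omega : n + k + 2 ≠ 0)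
  have hQ := P_ne hb (n + k + 1) (n + 2)
  have hP := P_ne hb (n + k) (n + 1)
  have key : P b (n + k + 1) (n + 1) * ((2 * (n : ℂ) + k + 2) ^ 2 - b) *
      ((2 * (n : ℂ) + k + 3) ^ 2 - b) = (((n : ℂ) + k + 1) ^ 2 - b) * P b (n + k + 2) (n + 2) := by
    have e := P_succ' b (n + k + 1) (n + 2)
    rw [P_succ, P_succ] at e
    push_cast at e ⊢
    rw [← e]
    ring
  have hf : ((n + k + 1).factorial : ℂ) ≠ 0 := by exact_mod_cast Nat.factorial_ne_zero _
  simp only [F]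
  rw [show n + 1 + k + 1 = n + k + 2 by ring, show 2 * (n + 1) + k = 2 * n + k + 1 + 1 by ring,
    show n + 1 + k = n + k + 1 by ring, show n + 1 + 1 = n + 2 by ring, Nat.factorial_succ n,
    Nat.factorial_succ (2 * n + k + 1), Nat.factorial_succ (2 * n + k),
    Nat.factorial_succ (n + k + 1), pow_succ]
  push_cast at hA hB hC ⊢
  have h2' : (n + k + 1 + 1 : ℂ) ≠ 0 := by convert h2 using 1; ring
  have e2 : (P b (n + k + 2) (n + 2))⁻¹ = (((n : ℂ) + k + 1) ^ 2 - b) /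
      (P b (n + k + 1) (n + 1) * ((2 * (n : ℂ) + k + 2) ^ 2 - b) *
      ((2 * (n : ℂ) + k + 3) ^ 2 - b)) := by
    rw [key]
    field_simp
  rw [div_eq_mul_inv _ (P b (n + k + 2) (n + 2)), e2]
  generalize P b (n + k + 1) (n + 1) = p at *
  generalize ((n : ℂ) + k + 1) ^ 2 - b = A at *
  generalize (2 * (n : ℂ) + k + 2) ^ 2 - b = B at *
  generalize (2 * (n : ℂ) + k + 3) ^ 2 - b = C at *
  generalize hd : (3 * n + 2 * k + 2 : ℂ) = d at *
  field_simp
  subst hd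
  ring

lemma F_succ_right {b : ℂ} (hb : ∀ m : ℕ, m ≠ 0 → (m : ℂ) ^ 2 - b ≠ 0) (n k : ℕ) :
    F b n (k + 1) = -F b n k * ((2 * n + k + 1) * (3 * n + 2 * k + 4)
      / ((3 * n + 2 * k + 2) * (n + k + 2))) * ((((n : ℂ) + k + 1) ^ 2 - b) /
      ((2 * (n : ℂ) + k + 2) ^ 2 - b)) := by
  have hA := hb (n + k + 1) (by omega)
  have hB := hb (2 * n + k + 2) (by omega)
  have h1 : (3 * n + 2 * k + 2 : ℂ) ≠ 0 := by exact_mod_cast (by omega : 3 * n + 2 * k + 2 ≠ 0)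
  have h2 : (n + k + 2 : ℂ) ≠ 0 := by exact_mod_cast (by omega : n + k + 2 ≠ 0)
  have hQ := P_ne hb (n + k + 1) (n + 1)
  have hP := P_ne hb (n + k) (n + 1)
  have key : P b (n + k + 1) (n + 1) * ((2 * (n : ℂ) + k + 2) ^ 2 - b)
      = (((n : ℂ) + k + 1) ^ 2 - b) * P b (n + k + 2) (n + 1) := by
    have e := P_succ' b (n + k + 1) (n + 1)
    rw [P_succ] at e
    push_cast at e ⊢
    rw [← e]
    ring
  have hf : ((n + k + 1).factorial : ℂ) ≠ 0 := by exact_mod_cast Nat.factorial_ne_zero _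
  simp only [F]
  rw [show n + (k + 1) + 1 = n + k + 2 by ring, show 2 * n + (k + 1) = 2 * n + k + 1 by ring,
    show n + (k + 1) = n + k + 1 by ring, Nat.factorial_succ (2 * n + k),
    Nat.factorial_succ (n + k + 1), pow_succ]
  push_cast at hA hB ⊢
  have h2' : (n + k + 1 + 1 : ℂ) ≠ 0 := by convert h2 using 1; ring
  have e2 : (P b (n + k + 2) (n + 1))⁻¹ = (((n : ℂ) + k + 1) ^ 2 - b) /
      (P b (n + k + 1) (n + 1) * ((2 * (n : ℂ) + k + 2) ^ 2 - b)) := by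
    rw [key]
    field_simp
  rw [div_eq_mul_inv _ (P b (n + k + 2) (n + 1)), e2]
  generalize P b (n + k + 1) (n + 1) = p at *
  generalize ((n : ℂ) + k + 1) ^ 2 - b = A at *
  generalize (2 * (n : ℂ) + k + 2) ^ 2 - b = B at *
  generalize hd : (3 * n + 2 * k + 2 : ℂ) = d at *
  field_simp
  subst hd
  ring

/-- The WZ relation: after dividing by `F b n k` it is an identity of rational functions. -/
lemma wz {b : ℂ} (hb : ∀ m : ℕ, m ≠ 0 → (m : ℂ) ^ 2 - b ≠ 0) (n k : ℕ) :
    F b n k - F b (n + 1) k = G b n k - G b n (k + 1) := by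
  have hB := hb (2 * n + k + 2) (by omega)
  have hC := hb (2 * n + k + 3) (by omega)
  have h1 : (3 * n + 2 * k + 2 : ℂ) ≠ 0 := by exact_mod_cast (by omega : 3 * n + 2 * k + 2 ≠ 0)
  have h3 : (3 * n + 2 * k + 4 : ℂ) ≠ 0 := by exact_mod_cast (by omega : 3 * n + 2 * k + 4 ≠ 0)
  have h2 : (n + k + 2 : ℂ) ≠ 0 := by exact_mod_cast (by omega : n + k + 2 ≠ 0)
  push_cast at hB hC
  rw [G, G, F_succ_left hb, F_succ_right hb]
  push_cast
  rw [show (3 * n + 2 * (k + 1) + 2 : ℂ) = 3 * n + 2 * k + 4 by ring,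
    show (2 * n + (k + 1) + 2 : ℂ) = 2 * n + k + 3 by ring]
  generalize F b n k = f
  generalize hd : (3 * n + 2 * k + 2 : ℂ) = d at *
  generalize he : (3 * n + 2 * k + 4 : ℂ) = e at *
  generalize hB' : (2 * (n : ℂ) + k + 2) ^ 2 - b = B at *
  generalize hC' : (2 * (n : ℂ) + k + 3) ^ 2 - b = C at *
  field_simp
  subst hd he hB' hC'
  ring

lemma rectangle {b : ℂ} (hb : ∀ m : ℕ, m ≠ 0 → (m : ℂ) ^ 2 - b ≠ 0) (L K : ℕ) :
    ∑ k ∈ range K, F b 0 k - ∑ k ∈ range K, F b L k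
      = ∑ n ∈ range L, G b n 0 - ∑ n ∈ range L, G b n K := by
  induction L with
  | zero => simp
  | succ L ih =>
    have h : ∑ k ∈ range K, F b L k - ∑ k ∈ range K, F b (L + 1) k = G b L 0 - G b L K := by
      rw [← sum_sub_distrib, sum_congr rfl fun k _ => wz hb L k, sum_range_sub']
    rw [sum_range_succ, sum_range_succ]
    linear_combination ih + h

lemma two_pow_factorial_le (n k : ℕ) :
    2 ^ n * n.factorial * (n + k).factorial ≤ (2 * n + k).factorial := by
  induction n with
  | zero => simp
  | succ n ih =>
    rw [show n + 1 + k = n + k + 1 by ring, show 2 * (n + 1) + k = 2 * n + k + 1 + 1 by ring,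
      Nat.factorial_succ n, Nat.factorial_succ (n + k), Nat.factorial_succ (2 * n + k + 1),
      Nat.factorial_succ (2 * n + k)]
    calc 2 ^ (n + 1) * ((n + 1) * n.factorial) * ((n + k + 1) * (n + k).factorial)
        = (2 * (n + 1) * (n + k + 1)) * (2 ^ n * n.factorial * (n + k).factorial) := by ring
      _ ≤ ((2 * n + k + 1 + 1) * (2 * n + k + 1)) * (2 * n + k).factorial := by
        gcongr <;> omega
      _ = _ := by ring

lemma half_sq_le {b : ℂ} {M m : ℕ} (hM : 2 * ‖b‖ ≤ (M : ℝ) ^ 2) (hm : M ≤ m) :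
    (m : ℝ) ^ 2 / 2 ≤ ‖(m : ℂ) ^ 2 - b‖ ∧ ‖(m : ℂ) ^ 2 - b‖ ≤ 3 / 2 * (m : ℝ) ^ 2 := by
  have h1 : (M : ℝ) ^ 2 ≤ (m : ℝ) ^ 2 := by gcongr
  have h2 : ‖(m : ℂ) ^ 2‖ = (m : ℝ) ^ 2 := by simp
  have h3 := norm_sub_norm_le ((m : ℂ) ^ 2) b
  have h4 := norm_sub_le ((m : ℂ) ^ 2) b
  constructor <;> linarith

lemma P_lower {b : ℂ} {M s : ℕ} (hM : 2 * ‖b‖ ≤ (M : ℝ) ^ 2) (hs : M ≤ s + 1) (r : ℕ) :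
    ((s + r).factorial : ℝ) ^ 2 ≤ ‖P b (s + 1) r‖ * 2 ^ r * (s.factorial : ℝ) ^ 2 := by
  induction r with
  | zero => simp [P]
  | succ r ih =>
    have h := (half_sq_le hM (show M ≤ s + 1 + r by omega)).1
    rw [P_succ, norm_mul, show s + (r + 1) = s + r + 1 by ring, Nat.factorial_succ]
    push_cast at h ⊢
    have h' : ((s : ℝ) + r + 1) ^ 2 ≤ 2 * ‖((s : ℂ) + 1 + r) ^ 2 - b‖ := by
      have : ((s : ℝ) + r + 1) ^ 2 = ((s : ℝ) + 1 + r) ^ 2 := by ring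
      linarith
    calc (((s : ℝ) + r + 1) * (s + r).factorial) ^ 2
        = ((s : ℝ) + r + 1) ^ 2 * ((s + r).factorial : ℝ) ^ 2 := by ring
      _ ≤ (2 * ‖((s : ℂ) + 1 + r) ^ 2 - b‖) *
          (‖P b (s + 1) r‖ * 2 ^ r * (s.factorial : ℝ) ^ 2) := by gcongr
      _ = _ := by ring

lemma F_bound {b : ℂ} {M n k : ℕ} (hM : 2 * ‖b‖ ≤ (M : ℝ) ^ 2) (hn : M ≤ n + k + 1) :
    ‖F b n k‖ ≤ 3 / (2 * n + k + 1 : ℝ) ^ 2 := by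
  have hP := P_lower hM hn (n + 1)
  have hf : (2 : ℝ) ^ n * n.factorial * (n + k).factorial ≤ (2 * n + k).factorial := by
    exact_mod_cast two_pow_factorial_le n k
  rw [show n + k + (n + 1) = 2 * n + k + 1 by ring, Nat.factorial_succ] at hP
  have hpos1 : (0 : ℝ) < (n + k).factorial := by exact_mod_cast Nat.factorial_pos _
  have hpos3 : (0 : ℝ) ≤ n.factorial := by positivity
  have hpos2 : (0 : ℝ) < (2 * n + k).factorial := by exact_mod_cast Nat.factorial_pos _
  have hnorm : ‖F b n k‖ = n.factorial * (2 * n + k).factorial * (3 * n + 2 * k + 2)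
    / (2 * (n + k + 1).factorial) / ‖P b (n + k + 1) (n + 1)‖ := by
    have : ‖(3 * n + 2 * k + 2 : ℂ)‖ = 3 * n + 2 * k + 2 := by
      have := Complex.norm_natCast (3 * n + 2 * k + 2)
      push_cast at this
      exact this
    simp [F, this]
  rw [hnorm, Nat.factorial_succ]
  push_cast at hP ⊢
  set p := ‖P b (n + k + 1) (n + 1)‖
  have hp : 0 < p := by
    have h0 : (0 : ℝ) < ((2 * n + k + 1) * (2 * n + k).factorial) ^ 2 := by positivity
    have h1 := h0.trans_le hP
    by_contra hp
    have : p * 2 ^ (n + 1) * ((n + k).factorial : ℝ) ^ 2 ≤ 0 := by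
      rw [mul_assoc]
      exact mul_nonpos_of_nonpos_of_nonneg (not_lt.1 hp) (by positivity)
    linarith
  rw [div_div, div_le_div_iff₀ (by positivity) (by positivity)]
  generalize ((n + k).factorial : ℝ) = u at *
  generalize ((2 * n + k).factorial : ℝ) = v at *
  generalize (n.factorial : ℝ) = w at *
  -- Both sides are compared after multiplication by `v`.
  refine le_of_mul_le_mul_right ?_ hpos2
  calc w * v * (3 * n + 2 * k + 2) * (2 * n + k + 1 : ℝ) ^ 2 * v
      = w * (3 * n + 2 * k + 2) * ((2 * n + k + 1) * v) ^ 2 := by ring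
    _ ≤ w * (3 * n + 2 * k + 2) * (p * 2 ^ (n + 1) * u ^ 2) := by
      gcongr
    _ = (3 * n + 2 * k + 2) * (2 * p * u) * (2 ^ n * w * u) := by ring
    _ ≤ (3 * (n + k + 1)) * (2 * p * u) * v := by
      gcongr
      have : (0 : ℝ) ≤ k := by positivity
      linarith
    _ = _ := by ring

lemma G_bound {b : ℂ} {M n k : ℕ} (hM : 2 * ‖b‖ ≤ (M : ℝ) ^ 2) (hn : M ≤ n + k + 1) :
    ‖G b n k‖ ≤ 12 / (2 * n + k + 1 : ℝ) ^ 2 := by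
  have hF := F_bound hM hn
  have hA := (half_sq_le hM hn).2
  have hB := (half_sq_le hM (show M ≤ 2 * n + k + 2 by omega)).1
  have hc : ‖((2 * n + k + 1) / (3 * n + 2 * k + 2) : ℂ)‖ ≤ 1 := by
    have e1 := Complex.norm_natCast (3 * n + 2 * k + 2)
    have e2 := Complex.norm_natCast (2 * n + k + 1)
    push_cast at e1 e2
    rw [norm_div, e1, e2, div_le_one (by positivity)]
    have : (0 : ℝ) ≤ k := by positivity
    have : (0 : ℝ) ≤ n := by positivity
    linarith
  push_cast at hA hB
  have hq : ‖(((n : ℂ) + k + 1) ^ 2 - b) / ((2 * (n : ℂ) + k + 2) ^ 2 - b)‖ ≤ 3 := by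
    have hpos : (0 : ℝ) < (2 * (n : ℝ) + k + 2) ^ 2 / 2 := by positivity
    rw [norm_div, div_le_iff₀ (hpos.trans_le hB)]
    have : ((n : ℝ) + k + 1) ^ 2 ≤ (2 * (n : ℝ) + k + 2) ^ 2 := by
      have : (0 : ℝ) ≤ n := by positivity
      gcongr <;> linarith
    linarith
  rw [G, norm_mul]
  calc _ ≤ 3 / (2 * n + k + 1 : ℝ) ^ 2 * (1 + 1 * 3) := by
        gcongr
        refine (norm_sub_le _ _).trans ?_
        rw [norm_one, norm_mul]
        gcongr
    _ = _ := by ring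

lemma F_zero (b : ℂ) (k : ℕ) : F b 0 k = (-1) ^ k / (((k : ℂ) + 1) ^ 2 - b) := by
  have h : (k + 1 : ℂ) ≠ 0 := by exact_mod_cast k.succ_ne_zero
  have hf : (k.factorial : ℂ) ≠ 0 := by exact_mod_cast Nat.factorial_ne_zero _
  simp only [F, P, Nat.factorial_succ]
  simp only [zero_add, mul_zero, Nat.cast_zero, range_one, prod_singleton, Nat.factorial_zero]
  push_cast
  congr 1
  · field_simp
  · ring

lemma prod_shift_mul_factorial (s r : ℕ) :
    (∏ j ∈ range r, ((s : ℂ) + (j + 1))) * s.factorial = (s + r).factorial := by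
  induction r with
  | zero => simp
  | succ r ih =>
    rw [prod_range_succ, show s + (r + 1) = s + r + 1 by ring, Nat.factorial_succ]
    push_cast
    rw [← ih]
    ring

lemma G_zero {b : ℂ} (hb : ∀ m : ℕ, m ≠ 0 → (m : ℂ) ^ 2 - b ≠ 0) (n : ℕ) :
    G b n 0 = (1 / 4) * ((-1 : ℂ) ^ n * (10 * ((n : ℂ) + 1) ^ 2 - 3 * ((n : ℂ) + 1) - b) /
            (((n : ℂ) + 1) * (2 * ((n : ℂ) + 1) - 1) * (((n : ℂ) + 1) ^ 2 - b) *
              (Nat.choose (2 * (n + 1)) (n + 1) : ℂ) *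
              ∏ j ∈ Finset.range (n + 1),
                (1 - b / (((n : ℂ) + 1) + ((j : ℂ) + 1)) ^ 2))) := by
  have hA := hb (n + 1) (by omega)
  have hB := hb (2 * n + 2) (by omega)
  have h1 : (3 * n + 2 : ℂ) ≠ 0 := by exact_mod_cast (by omega : 3 * n + 2 ≠ 0)
  have h2 : (n + 1 : ℂ) ≠ 0 := by exact_mod_cast (by omega : n + 1 ≠ 0)
  have h3 : (2 * n + 1 : ℂ) ≠ 0 := by exact_mod_cast (by omega : 2 * n + 1 ≠ 0)
  have hf : (n.factorial : ℂ) ≠ 0 := by exact_mod_cast Nat.factorial_ne_zero _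
  have hf2 : ((2 * n).factorial : ℂ) ≠ 0 := by exact_mod_cast Nat.factorial_ne_zero _
  have hP := P_ne hb n (n + 1)
  have hQ := P_ne hb (n + 1) (n + 1)
  have key : P b (n + 1) (n + 1) * ((2 * (n : ℂ) + 2) ^ 2 - b)
      = (((n : ℂ) + 1) ^ 2 - b) * P b (n + 2) (n + 1) := by
    have e := P_succ' b (n + 1) (n + 1)
    rw [P_succ] at e
    push_cast at e ⊢
    rw [← e]
    ring
  have hprod : ∏ j ∈ range (n + 1), (1 - b / (((n : ℂ) + 1) + ((j : ℂ) + 1)) ^ 2)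
      = P b (n + 2) (n + 1) / (∏ j ∈ range (n + 1), (((n + 1 : ℕ) : ℂ) + (j + 1))) ^ 2 := by
    rw [P, ← prod_pow, ← prod_div_distrib]
    refine prod_congr rfl fun j _ => ?_
    have : ((n : ℂ) + 1 + (j + 1)) ≠ 0 := by
      exact_mod_cast (by omega : n + 1 + (j + 1) ≠ 0)
    push_cast
    rw [show (n : ℂ) + 2 + j = n + 1 + (j + 1) by ring]
    field_simp
  have hfac := prod_shift_mul_factorial (n + 1) (n + 1)
  have hch : (Nat.choose (2 * (n + 1)) (n + 1) : ℂ) * ((n + 1).factorial * (n + 1).factorial)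
      = (2 * n + 2).factorial := by
    have := Nat.choose_mul_factorial_mul_factorial (show n + 1 ≤ 2 * (n + 1) by omega)
    rw [show 2 * (n + 1) - (n + 1) = n + 1 by omega, mul_assoc] at this
    exact_mod_cast this
  have hf1 : ((n + 1).factorial : ℂ) ≠ 0 := by exact_mod_cast Nat.factorial_ne_zero _
  rw [show n + 1 + (n + 1) = 2 * n + 2 by ring] at hfac
  rw [hprod, eq_div_of_mul_eq hf1 hfac, eq_div_of_mul_eq (mul_ne_zero hf1 hf1) hch]
  have e2 : P b (n + 2) (n + 1) = P b (n + 1) (n + 1) * ((2 * (n : ℂ) + 2) ^ 2 - b) /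
      (((n : ℂ) + 1) ^ 2 - b) := by
    push_cast at hA
    rw [key]
    field_simp
  rw [e2]
  simp only [G, F, add_zero, Nat.cast_zero, mul_zero]
  rw [Nat.factorial_succ (2 * n + 1), Nat.factorial_succ (2 * n), Nat.factorial_succ n]
  push_cast at hA hB ⊢
  have h4 : (2 * (n + 1) - 1 : ℂ) ≠ 0 := by convert h3 using 1; ring
  have h5 : (2 * n + 1 + 1 : ℂ) ≠ 0 := by exact_mod_cast (by omega : 2 * n + 1 + 1 ≠ 0)
  generalize P b (n + 1) (n + 1) = p at *
  generalize (n.factorial : ℂ) = w at *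
  generalize ((2 * n).factorial : ℂ) = v at *
  generalize hA' : ((n : ℂ) + 1) ^ 2 - b = A at *
  generalize hB' : (2 * (n : ℂ) + 2) ^ 2 - b = B at *
  field_simp
  subst hA' hB'
  ring

lemma summable_of_bound {f : ℕ → ℂ} (M : ℕ) (C : ℝ)
    (h : ∀ n, M ≤ n → ‖f n‖ ≤ C / ((n : ℝ) + 1) ^ 2) : Summable f := by
  have h2 : Summable fun n : ℕ => C / ((n : ℝ) + 1) ^ 2 := by
    have := (summable_nat_add_iff 1).2 (Real.summable_one_div_nat_pow.2 one_lt_two)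
    simpa [div_eq_mul_inv] using this.mul_left C
  refine Summable.of_norm_bounded_eventually_nat h2 ?_
  filter_upwards [eventually_ge_atTop M] with n hn using h n hn

/-- A sum of `L` terms of size `O(1/L²)` tends to zero. -/
lemma side_tendsto {f : ℕ → ℕ → ℂ} (M : ℕ) {C : ℝ}
    (h : ∀ L, M ≤ L → ∀ i, ‖f L i‖ ≤ C / ((L : ℝ) + 1) ^ 2) :
    Tendsto (fun L => ∑ i ∈ range L, f L i) atTop (𝓝 0) := by
  have hlim : Tendsto (fun L : ℕ => C * (1 / ((L : ℝ) + 1))) atTop (𝓝 0) := by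
    simpa using tendsto_one_div_add_atTop_nhds_zero_nat.const_mul C
  refine squeeze_zero_norm' ?_ hlim
  filter_upwards [eventually_ge_atTop M] with L hL
  have hC : 0 ≤ C / ((L : ℝ) + 1) ^ 2 := (norm_nonneg _).trans (h L hL 0)
  calc _ ≤ ∑ i ∈ range L, C / ((L : ℝ) + 1) ^ 2 := norm_sum_le_of_le _ fun i _ => h L hL i
    _ = L * (C / ((L : ℝ) + 1) ^ 2) := by simp
    _ ≤ (L + 1) * (C / ((L : ℝ) + 1) ^ 2) := by gcongr; linarith
    _ = _ := by field_simp

lemma tsum_eq {b : ℂ} (hb : ∀ m : ℕ, m ≠ 0 → (m : ℂ) ^ 2 - b ≠ 0) :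
    ∑' k, F b 0 k = ∑' n, G b n 0 := by
  obtain ⟨M, hM⟩ : ∃ M : ℕ, 2 * ‖b‖ ≤ (M : ℝ) ^ 2 := by
    obtain ⟨M, hM⟩ := exists_nat_ge (2 * ‖b‖ + 1)
    exact ⟨M, by nlinarith [norm_nonneg b]⟩
  have mono : ∀ {C : ℝ} {x y : ℝ}, 0 ≤ C → 0 ≤ x → x ≤ y → C / (y + 1) ^ 2 ≤ C / (x + 1) ^ 2 := by
    intro C x y hC hx hxy
    gcongr
  have hF : Summable fun k => F b 0 k := summable_of_bound M 3 fun k hk => by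
    simpa using F_bound (n := 0) hM (show M ≤ 0 + k + 1 by omega)
  have hG : Summable fun n => G b n 0 := summable_of_bound M 12 fun n hn => by
    refine (G_bound (k := 0) hM (by omega)).trans (mono (by norm_num) (by positivity) ?_)
    push_cast
    linarith [(Nat.cast_nonneg n : (0 : ℝ) ≤ n)]
  have h1 : Tendsto (fun L => ∑ k ∈ range L, F b L k) atTop (𝓝 0) :=
    side_tendsto M (C := 3) fun L hL k => by
      refine (F_bound hM (by omega)).trans (mono (by norm_num) (by positivity) ?_)
      linarith [(Nat.cast_nonneg L : (0 : ℝ) ≤ L), (Nat.cast_nonneg k : (0 : ℝ) ≤ k)]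
  have h2 : Tendsto (fun L => ∑ n ∈ range L, G b n L) atTop (𝓝 0) :=
    side_tendsto (f := fun L n => G b n L) M (C := 12) fun L hL n => by
      refine (G_bound hM (by omega)).trans (mono (by norm_num) (by positivity) ?_)
      linarith [(Nat.cast_nonneg n : (0 : ℝ) ≤ n)]
  have l1 := hF.hasSum.tendsto_sum_nat.sub h1
  have l2 := hG.hasSum.tendsto_sum_nat.sub h2
  simp only [rectangle hb, sub_zero] at l1 l2
  exact tendsto_nhds_unique l1 l2

end WZ

theorem stmt5 (a : ℂ) (ha : ∀ m : ℤ, m ≠ 0 → a ≠ (m : ℂ)) :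
    ∑' n : ℕ, (-1 : ℂ) ^ n / (((n : ℂ) + 1) ^ 2 - a ^ 2)
      = (1 / 4) * ∑' n : ℕ,
          (-1 : ℂ) ^ n * (10 * ((n : ℂ) + 1) ^ 2 - 3 * ((n : ℂ) + 1) - a ^ 2) /
            (((n : ℂ) + 1) * (2 * ((n : ℂ) + 1) - 1) * (((n : ℂ) + 1) ^ 2 - a ^ 2) *
              (Nat.choose (2 * (n + 1)) (n + 1) : ℂ) *
              ∏ j ∈ Finset.range (n + 1),
                (1 - a ^ 2 / (((n : ℂ) + 1) + ((j : ℂ) + 1)) ^ 2)) := by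
  have hb : ∀ m : ℕ, m ≠ 0 → (m : ℂ) ^ 2 - a ^ 2 ≠ 0 := by
    intro m hm h
    rcases sq_eq_sq_iff_eq_or_eq_neg.1 (sub_eq_zero.1 h) with h | h
    · exact ha m (by exact_mod_cast hm) (by simp [h])
    · exact ha (-m) (by simpa using hm) (by simp [h])
  rw [← tsum_mul_left, ← tsum_congr fun n => WZ.G_zero hb n, ← WZ.tsum_eq hb]
  exact tsum_congr fun k => (WZ.F_zero _ k).symm
end

section
/- Let K = ∑_{n=1}^∞ χ(n)/n², where χ(n) is the Legendre symbol (n/3), i.e. χ(n) = 1 if n ≡ 1 (mod 3), χ(n) = −1 if n ≡ 2 (mod 3), and χ(n) = 0 if 3 | n. Then K = ∑_{n=1}^∞ (15n − 4)(−27)^{n−1} / (n³ C(2n, n)² C(3n, n)). -/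
/-!
Grouping the defining series by residues modulo `3` gives `K = (3/4) S 0`, where
`S n = ∑ₖ (2k + n + 1) w n k` and `w n k = ((1/3)ₖ (2/3)ₖ / ((n + 4/3)ₖ (n + 5/3)ₖ))²`.
The series `S n` is a very-well-poised hypergeometric series with top parameter `a = n + 1` and the other
parameters `1/3, 1/3, 2/3, 2/3` held fixed.

Raising `a` by one is a contiguous relation `S n = cert n 0 + ratio n * S (n + 1)`
(`S_rec`), which is a telescoping in `k` with the certificate `cert n k * w n k`, where `cert n k`
is a quadratic polynomial in `k` (`wz_step`). Since `|ratio n| ≤ 1/2` and `S n ≤ (n + 1) S 0`,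
iterating it gives `S 0 = ∑ₙ coef n * cert n 0` with `coef n = ∏_{i < n} ratio i`, and the summand
`coef n * cert n 0` is `4/3` times the summand of the claimed series (`term_eq`).
-/

/-- The Legendre symbol `(n/3)`: `1` if `n ≡ 1 (mod 3)`, `-1` if `n ≡ 2 (mod 3)`,
`0` if `3 ∣ n`. -/
def chi3 (n : ℕ) : ℝ := if n % 3 = 1 then 1 else if n % 3 = 2 then -1 else 0

/-- `K = ∑_{n ≥ 1} (n/3) / n²`. -/
noncomputable def Kconst : ℝ := ∑' n : ℕ, chi3 (n + 1) / ((n : ℝ) + 1) ^ 2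

/-- The hypergeometric weight `((1/3)ₖ (2/3)ₖ / ((n + 4/3)ₖ (n + 5/3)ₖ))²`, with all factors
multiplied by `3`. -/
noncomputable def w (n k : ℕ) : ℝ :=
  (∏ j ∈ Finset.range k, ((3 * j + 1) * (3 * j + 2) : ℝ) /
    ((3 * n + 3 * j + 4) * (3 * n + 3 * j + 5))) ^ 2

/-- The summand of the very-well-poised series `S n`. -/
noncomputable def T (n k : ℕ) : ℝ := (2 * k + n + 1) * w n k

/-- The very-well-poised series `∑ₖ (2k + n + 1) w n k`. -/
noncomputable def S (n : ℕ) : ℝ := ∑' k, T n k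

/-- The factor of `S (n + 1)` in the contiguous relation `S_rec`. -/
noncomputable def ratio (n : ℕ) : ℝ :=
  -(9 * (n + 1) ^ 3 * (3 * n + 2)) / ((3 * n + 4) * (3 * n + 5) ^ 2 * (2 * (2 * n + 1)))

/-- The polynomial (in `k`) part of the telescoping certificate. -/
noncomputable def cert (n k : ℕ) : ℝ :=
  (k ^ 2 + (3 * n + 2) * k + (15 * n + 11) * (3 * n + 2) / 18) / (2 * n + 1)

/-- The coefficient of `S n` after `n` iterations of the contiguous relation. -/
noncomputable def coef (n : ℕ) : ℝ := ∏ i ∈ Finset.range n, ratio i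

lemma w_zero (n : ℕ) : w n 0 = 1 := by simp [w]

lemma w_nonneg (n k : ℕ) : 0 ≤ w n k := sq_nonneg _

lemma w_succ (n k : ℕ) : w n (k + 1) = w n k * (((3 * k + 1) * (3 * k + 2) : ℝ) /
    ((3 * n + 3 * k + 4) * (3 * n + 3 * k + 5))) ^ 2 := by
  unfold w
  rw [Finset.prod_range_succ, mul_pow]

lemma w_shift (n k : ℕ) : w (n + 1) k = w n k * (((3 * n + 4) * (3 * n + 5) : ℝ) /
    ((3 * n + 3 * k + 4) * (3 * n + 3 * k + 5))) ^ 2 := by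
  induction k with
  | zero =>
    rw [w_zero, w_zero]
    field_simp
    simp
  | succ k ih =>
    rw [w_succ, w_succ, ih]
    push_cast
    have h1 : (3 * (n + 1 : ℝ) + 3 * k + 4) ≠ 0 := by positivity
    have h2 : (3 * (n + 1 : ℝ) + 3 * k + 5) ≠ 0 := by positivity
    have h3 : (3 * (n : ℝ) + 3 * (k + 1) + 4) ≠ 0 := by positivity
    have h4 : (3 * (n : ℝ) + 3 * (k + 1) + 5) ≠ 0 := by positivity
    field_simp
    ring

lemma w_zero_left (k : ℕ) : w 0 k = 4 / ((3 * k + 1) * (3 * k + 2) : ℝ) ^ 2 := by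
  induction k with
  | zero => rw [w_zero]; norm_num
  | succ k ih =>
    rw [w_succ, ih]
    push_cast
    field_simp
    ring

lemma w_le (n k : ℕ) : w n k ≤ w 0 k := by
  induction n with
  | zero => exact le_rfl
  | succ n ih =>
    refine le_trans ?_ ih
    rw [w_shift]
    refine mul_le_of_le_one_right (w_nonneg n k) (pow_le_one₀ (by positivity) ?_)
    rw [div_le_one (by positivity)]
    have : (0 : ℝ) ≤ k := by positivity
    gcongr <;> linarith

lemma w_le' (n k : ℕ) : w n k ≤ 1 / ((k : ℝ) + 1) ^ 4 := by
  refine (w_le n k).trans ?_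
  rw [w_zero_left, div_le_div_iff₀ (by positivity) (by positivity)]
  have hk : (0 : ℝ) ≤ k := by positivity
  -- `2 (k+1)² ≤ (3k+1)(3k+2)` holds because the difference is `5k(k+1)`
  have h : 2 * ((k : ℝ) + 1) ^ 2 ≤ (3 * k + 1) * (3 * k + 2) := by nlinarith
  calc 4 * ((k : ℝ) + 1) ^ 4 = (2 * ((k : ℝ) + 1) ^ 2) ^ 2 := by ring
    _ ≤ ((3 * (k : ℝ) + 1) * (3 * k + 2)) ^ 2 := by gcongr
    _ = 1 * ((3 * (k : ℝ) + 1) * (3 * k + 2)) ^ 2 := (one_mul _).symm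

lemma T_nonneg (n k : ℕ) : 0 ≤ T n k := mul_nonneg (by positivity) (w_nonneg n k)

lemma T_le (n k : ℕ) : T n k ≤ (n + 1) * T 0 k := by
  unfold T
  rw [← mul_assoc]
  refine mul_le_mul ?_ (w_le n k) (w_nonneg n k) (by positivity)
  have : (0 : ℝ) ≤ n * k := by positivity
  push_cast
  nlinarith

lemma summable_T_zero : Summable (T 0) := by
  have h : Summable fun k : ℕ => 2 * (1 / ((k : ℝ) + 1) ^ 2) := by
    have := (summable_nat_add_iff 1).2
      (Real.summable_one_div_nat_pow.2 (by norm_num : 1 < 2))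
    push_cast at this
    exact this.mul_left 2
  refine Summable.of_nonneg_of_le (T_nonneg 0) (fun k => ?_) h
  unfold T
  calc (2 * (k : ℝ) + (0 : ℕ) + 1) * w 0 k
      ≤ (2 * ((k : ℝ) + 1) ^ 2) * (1 / ((k : ℝ) + 1) ^ 4) := by
        refine mul_le_mul ?_ (w_le' 0 k) (w_nonneg 0 k) (by positivity)
        have : (0 : ℝ) ≤ k := by positivity
        push_cast
        nlinarith
    _ = _ := by field_simp

lemma summable_T (n : ℕ) : Summable (T n) :=
  Summable.of_nonneg_of_le (T_nonneg n) (T_le n) (summable_T_zero.mul_left _)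

lemma S_nonneg (n : ℕ) : 0 ≤ S n := tsum_nonneg (T_nonneg n)

lemma S_le (n : ℕ) : S n ≤ (n + 1) * S 0 := by
  unfold S
  rw [← tsum_mul_left]
  exact (summable_T n).tsum_le_tsum (T_le n) (summable_T_zero.mul_left _)

/-- The WZ-type identity behind the contiguous relation. -/
lemma wz_step (n k : ℕ) : T n k - ratio n * T (n + 1) k =
    cert n k * w n k - cert n (k + 1) * w n (k + 1) := by
  unfold T
  rw [w_shift, w_succ]
  unfold ratio cert
  push_cast
  field_simp
  ring

lemma tendsto_cert (n : ℕ) :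
    Filter.Tendsto (fun k => cert n k * w n k) Filter.atTop (nhds 0) := by
  have h1 : Filter.Tendsto (fun k : ℕ => cert n 0 * (1 / ((k : ℝ) + 1)) +
      (3 * n + 3) * (1 / ((k : ℝ) + 1))) Filter.atTop (nhds 0) := by
    simpa using (tendsto_one_div_add_atTop_nhds_zero_nat (𝕜 := ℝ)).const_mul (cert n 0) |>.add
      ((tendsto_one_div_add_atTop_nhds_zero_nat (𝕜 := ℝ)).const_mul (3 * (n : ℝ) + 3))
  refine squeeze_zero (fun k => mul_nonneg (by unfold cert; positivity) (w_nonneg n k))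
    (fun k => ?_) h1
  have hk : (0 : ℝ) ≤ k := by positivity
  have hn : (0 : ℝ) ≤ n := by positivity
  have hc0 : 0 ≤ cert n 0 := by unfold cert; positivity
  have hc : cert n k ≤ (cert n 0 + (3 * n + 3)) * ((k : ℝ) + 1) ^ 2 := by
    have e : cert n k = (k ^ 2 + (3 * n + 2) * k) / (2 * n + 1) + cert n 0 := by
      unfold cert
      push_cast
      field_simp
      ring
    have h2 : ((k : ℝ) ^ 2 + (3 * n + 2) * k) / (2 * n + 1) ≤ k ^ 2 + (3 * n + 2) * k :=
      div_le_self (by positivity) (by linarith)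
    have h3 : cert n 0 * 1 ≤ cert n 0 * ((k : ℝ) + 1) ^ 2 := by
      gcongr
      nlinarith
    have h4 : (k : ℝ) ^ 2 + (3 * n + 2) * k ≤ (3 * n + 3) * ((k : ℝ) + 1) ^ 2 := by
      have : (0 : ℝ) ≤ n * k := by positivity
      have : (0 : ℝ) ≤ n * k ^ 2 := by positivity
      nlinarith
    rw [e]
    linarith
  have hw : w n k ≤ 1 / ((k : ℝ) + 1) ^ 3 := by
    refine (w_le' n k).trans ?_
    gcongr <;> [linarith; norm_num]
  calc cert n k * w n k
      ≤ (cert n 0 + (3 * n + 3)) * ((k : ℝ) + 1) ^ 2 * (1 / ((k : ℝ) + 1) ^ 3) :=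
        mul_le_mul hc hw (w_nonneg n k) (by positivity)
    _ = _ := by field_simp

/-- The contiguous relation for the very-well-poised series. -/
lemma S_rec (n : ℕ) : S n - ratio n * S (n + 1) = cert n 0 := by
  have h1 : HasSum (fun k => T n k - ratio n * T (n + 1) k) (S n - ratio n * S (n + 1)) :=
    (summable_T n).hasSum.sub ((summable_T (n + 1)).hasSum.mul_left _)
  have h2 := h1.tendsto_sum_nat
  simp only [wz_step, Finset.sum_range_sub'] at h2
  have h3 := (tendsto_const_nhds (x := cert n 0 * w n 0)).sub (tendsto_cert n)
  have := tendsto_nhds_unique h2 h3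
  simpa [w_zero] using this

lemma abs_ratio_le (n : ℕ) : |ratio n| ≤ 1 / 2 := by
  unfold ratio
  rw [neg_div, abs_neg, abs_of_nonneg (by positivity),
    div_le_div_iff₀ (by positivity) (by positivity)]
  have hn : (0 : ℝ) ≤ n := by positivity
  have h2 : (0 : ℝ) ≤ (n : ℝ) ^ 2 := by positivity
  have h3 : (0 : ℝ) ≤ (n : ℝ) ^ 3 := by positivity
  have h4 : (0 : ℝ) ≤ (n : ℝ) ^ 4 := by positivity
  nlinarith

lemma abs_coef_le (n : ℕ) : |coef n| ≤ (1 / 2) ^ n := by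
  unfold coef
  rw [Finset.abs_prod]
  calc _ ≤ ∏ _i ∈ Finset.range n, (1 / 2 : ℝ) :=
        Finset.prod_le_prod (fun _ _ => abs_nonneg _) (fun i _ => abs_ratio_le i)
    _ = _ := by simp

lemma S_zero_eq : S 0 = ∑' n, coef n * cert n 0 := by
  have hd : Summable fun n => coef n * S n := by
    have hg : Summable fun n : ℕ => (((n : ℝ) ^ 1 * (1 / 2) ^ n) + (1 / 2) ^ n) * S 0 :=
      ((summable_pow_mul_geometric_of_norm_lt_one 1 (by norm_num : ‖(1 / 2 : ℝ)‖ < 1)).add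
        (summable_geometric_of_lt_one (by norm_num) (by norm_num))).mul_right _
    refine Summable.of_norm_bounded hg (fun n => ?_)
    rw [Real.norm_eq_abs, abs_mul, abs_of_nonneg (S_nonneg n)]
    calc |coef n| * S n ≤ (1 / 2) ^ n * ((n + 1) * S 0) :=
          mul_le_mul (abs_coef_le n) (S_le n) (S_nonneg n) (by positivity)
      _ = _ := by ring
  have hd' := (summable_nat_add_iff 1).2 hd
  have e : ∀ n, coef n * cert n 0 = coef n * S n - coef (n + 1) * S (n + 1) := by
    intro n
    rw [← S_rec n, show coef (n + 1) = coef n * ratio n from Finset.prod_range_succ _ _]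
    ring
  simp only [e]
  rw [hd.tsum_sub hd', hd.tsum_eq_zero_add]
  simp [coef]

/-- The product of binomial coefficients in the denominator is `(2m)! (3m)! / m!⁵`. -/
lemma choose_prod (m : ℕ) : (Nat.choose (2 * m) m : ℝ) ^ 2 * (Nat.choose (3 * m) m : ℝ) =
    ((2 * m).factorial * (3 * m).factorial : ℝ) / (m.factorial : ℝ) ^ 5 := by
  have h1 := Nat.add_choose_mul_factorial_mul_factorial m m
  have h2 := Nat.add_choose_mul_factorial_mul_factorial (2 * m) m
  rw [← two_mul] at h1
  rw [show 2 * m + m = 3 * m by ring] at h2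
  have h1' : (Nat.choose (2 * m) m : ℝ) * m.factorial * m.factorial = (2 * m).factorial := by
    exact_mod_cast h1
  have h2' : (Nat.choose (3 * m) m : ℝ) * m.factorial * (2 * m).factorial
      = (3 * m).factorial := by
    rw [mul_right_comm]
    exact_mod_cast h2
  rw [← h2', ← h1']
  have : (m.factorial : ℝ) ≠ 0 := by positivity
  field_simp

/-- Closed form of `coef n`. -/
lemma coef_eq (n : ℕ) : coef n * (3 * n + 2) / (2 * n + 1) =
    24 * ((-27 : ℝ) ^ n / (((n : ℝ) + 1) ^ 3 *
      (((2 * (n + 1)).factorial * (3 * (n + 1)).factorial : ℝ) /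
        ((n + 1).factorial : ℝ) ^ 5))) := by
  induction n with
  | zero => norm_num [coef, Nat.factorial]
  | succ n ih =>
    have hc : coef (n + 1) = coef n * ratio n := Finset.prod_range_succ _ _
    have h2 : (2 * (n + 1 + 1)).factorial = (2 * n + 4) * ((2 * n + 3) *
        (2 * (n + 1)).factorial) := by
      rw [show 2 * (n + 1 + 1) = (2 * (n + 1) + 1) + 1 by ring, Nat.factorial_succ,
        Nat.factorial_succ]
      ring
    have h3 : (3 * (n + 1 + 1)).factorial = (3 * n + 6) * ((3 * n + 5) * ((3 * n + 4) *
        (3 * (n + 1)).factorial)) := by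
      rw [show 3 * (n + 1 + 1) = (3 * (n + 1) + 2) + 1 by ring, Nat.factorial_succ,
        Nat.factorial_succ, Nat.factorial_succ]
      ring
    have h1 : (n + 1 + 1).factorial = (n + 2) * (n + 1).factorial := Nat.factorial_succ _
    have hcn : coef n = 24 * ((-27 : ℝ) ^ n / (((n : ℝ) + 1) ^ 3 *
      (((2 * (n + 1)).factorial * (3 * (n + 1)).factorial : ℝ) /
        ((n + 1).factorial : ℝ) ^ 5))) * (2 * n + 1) / (3 * n + 2) := by
      rw [← ih]
      field_simp
    rw [hc, hcn, h1, h2, h3]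
    unfold ratio
    have p1 : ((n + 1).factorial : ℝ) ≠ 0 := by positivity
    have p2 : ((2 * (n + 1)).factorial : ℝ) ≠ 0 := by positivity
    have p3 : ((3 * (n + 1)).factorial : ℝ) ≠ 0 := by positivity
    generalize (n + 1).factorial = f1 at *
    generalize (2 * (n + 1)).factorial = f2 at *
    generalize (3 * (n + 1)).factorial = f3 at *
    have q1 : (3 * ((n : ℝ) + 1) + 2) ≠ 0 := by positivity
    have q2 : (2 * ((n : ℝ) + 1) + 1) ≠ 0 := by positivity
    have q3 : ((n : ℝ) + 1 + 1) ≠ 0 := by positivity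
    push_cast
    field_simp
    ring

lemma term_eq (n : ℕ) :
    (15 * ((n : ℝ) + 1) - 4) * (-27 : ℝ) ^ n /
        (((n : ℝ) + 1) ^ 3 * (Nat.choose (2 * (n + 1)) (n + 1) : ℝ) ^ 2 *
          (Nat.choose (3 * (n + 1)) (n + 1) : ℝ)) = 3 / 4 * (coef n * cert n 0) := by
  have h : coef n * cert n 0 = (coef n * (3 * n + 2) / (2 * n + 1)) * (15 * n + 11) / 18 := by
    unfold cert
    push_cast
    field_simp
    ring
  rw [h, coef_eq, mul_assoc (((n : ℝ) + 1) ^ 3), choose_prod]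
  ring

lemma Kconst_eq : Kconst = 3 / 4 * S 0 := by
  have hs : Summable fun n : ℕ => chi3 (n + 1) / ((n : ℝ) + 1) ^ 2 := by
    have := (summable_nat_add_iff 1).2
      (Real.summable_one_div_nat_pow.2 (by norm_num : 1 < 2))
    push_cast at this
    refine Summable.of_norm_bounded this (fun n => ?_)
    rw [norm_div, Real.norm_eq_abs, Real.norm_eq_abs, abs_of_nonneg
      (by positivity : (0 : ℝ) ≤ ((n : ℝ) + 1) ^ 2)]
    gcongr
    unfold chi3
    split_ifs <;> simp
  have hsub : ∀ r : ℕ, Summable fun m : ℕ =>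
      chi3 (r + 3 * m + 1) / (((r + 3 * m : ℕ) : ℝ) + 1) ^ 2 := fun r =>
    hs.comp_injective (i := fun m => r + 3 * m) (fun a b h => by simpa using h)
  unfold Kconst
  rw [Nat.sumByResidueClasses hs 3]
  change ∑ j : Fin 3, ∑' m : ℕ,
    chi3 (j.val + 3 * m + 1) / (((j.val + 3 * m : ℕ) : ℝ) + 1) ^ 2 = _
  rw [Fin.sum_univ_three]
  change ∑' m : ℕ, chi3 (0 + 3 * m + 1) / (((0 + 3 * m : ℕ) : ℝ) + 1) ^ 2 +
    ∑' m : ℕ, chi3 (1 + 3 * m + 1) / (((1 + 3 * m : ℕ) : ℝ) + 1) ^ 2 +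
    ∑' m : ℕ, chi3 (2 + 3 * m + 1) / (((2 + 3 * m : ℕ) : ℝ) + 1) ^ 2 = _
  rw [← (hsub 0).tsum_add (hsub 1), ← ((hsub 0).add (hsub 1)).tsum_add (hsub 2)]
  unfold S
  rw [← tsum_mul_left]
  congr 1
  funext m
  have c0 : chi3 (0 + 3 * m + 1) = 1 := by
    unfold chi3; rw [if_pos (by omega)]
  have c1 : chi3 (1 + 3 * m + 1) = -1 := by
    unfold chi3; rw [if_neg (by omega), if_pos (by omega)]
  have c2 : chi3 (2 + 3 * m + 1) = 0 := by
    unfold chi3; rw [if_neg (by omega), if_neg (by omega)]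
  rw [c0, c1, c2]
  unfold T
  rw [w_zero_left]
  push_cast
  have h1 : (1 + 3 * (m : ℝ) + 1) ≠ 0 := by positivity
  have h0 : (0 + 3 * (m : ℝ) + 1) ≠ 0 := by positivity
  field_simp
  ring

theorem stmt6 :
    Kconst = ∑' n : ℕ,
      (15 * ((n : ℝ) + 1) - 4) * (-27 : ℝ) ^ n /
        (((n : ℝ) + 1) ^ 3 * (Nat.choose (2 * (n + 1)) (n + 1) : ℝ) ^ 2 *
          (Nat.choose (3 * (n + 1)) (n + 1) : ℝ)) := by
  simp only [term_eq]
  rw [tsum_mul_left, ← S_zero_eq, Kconst_eq]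
end

section
/- Let K = ∑_{n=1}^∞ χ(n)/n², where χ(n) is the Legendre symbol (n/3), i.e. χ(n) = 1 if n ≡ 1 (mod 3), χ(n) = −1 if n ≡ 2 (mod 3), and χ(n) = 0 if 3 | n. Then K = ∑_{n=1}^∞ (−27)^{n−1} (5535n³ − 4689n² + 1110n − 80) / (n³ (3n−1)(3n−2) C(6n, 3n)² C(3n, n)). -/
open Filter Topology Finset

namespace WZ

/-! ### The WZ pair -/

/-- The factorial part of the WZ summand, that is `H n k` without the linear
very well-poised factor `3n + 2k + 1`. -/
noncomputable def W (n k : ℕ) : ℝ :=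
  27 * (-27) ^ n * (3 * n + 1) * (Nat.factorial (3 * n) : ℝ) * (Nat.factorial n : ℝ) ^ 3 /
      (Nat.factorial (2 * n) : ℝ) *
    ((Nat.factorial (3 * n + 3 * k) : ℝ) * (Nat.factorial (2 * n + k + 1) : ℝ) /
      ((Nat.factorial (n + k) : ℝ) * (Nat.factorial (6 * n + 3 * k + 3) : ℝ))) ^ 2

/-- The WZ summand; `H 0 k` is the `k`-th block of three consecutive terms of the series
for `K`. -/
noncomputable def H (n k : ℕ) : ℝ := W n k * (3 * n + 2 * k + 1)

/-- The numerator of the rational certificate, a solution of the Gosper equation for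
`H n k - H (n+1) k` as a function of `k`. -/
noncomputable def Q (x y : ℝ) : ℝ :=
  (7504 / 9 + 8708 * x + 36908 * x ^ 2 + 81549 * x ^ 3 + 99351 * x ^ 4 + 63423 * x ^ 5
      + 16605 * x ^ 6)
    + (4096 + 34412 * x + 113670 * x ^ 2 + 184626 * x ^ 3 + 147582 * x ^ 4 + 46494 * x ^ 5) * y
    + (7782 + 51651 * x + 126585 * x ^ 2 + 135756 * x ^ 3 + 53784 * x ^ 4) * y ^ 2
    + (7704 + 38196 * x + 62046 * x ^ 2 + 33048 * x ^ 3) * y ^ 3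
    + (4320 + 14175 * x + 11421 * x ^ 2) * y ^ 4
    + (1296 + 2106 * x) * y ^ 5 + 162 * y ^ 6

/-- The WZ companion of `H`. -/
noncomputable def U (n k : ℕ) : ℝ :=
  W n k * Q n k / (2 * (2 * n + 1) * ((6 * n + 3 * k + 4) * (6 * n + 3 * k + 5)) ^ 2)

lemma fact_add_three (m : ℕ) : (Nat.factorial (m + 3) : ℝ) =
    (m + 3) * (m + 2) * (m + 1) * Nat.factorial m := by
  simp only [Nat.factorial_succ]
  push_cast
  ring

lemma fact_add_two (m : ℕ) : (Nat.factorial (m + 2) : ℝ) =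
    (m + 2) * (m + 1) * Nat.factorial m := by
  simp only [Nat.factorial_succ]
  push_cast
  ring

lemma fact_add_one (m : ℕ) : (Nat.factorial (m + 1) : ℝ) = (m + 1) * Nat.factorial m := by
  simp only [Nat.factorial_succ]
  push_cast
  ring

lemma fact_ne (m : ℕ) : (Nat.factorial m : ℝ) ≠ 0 := by positivity

lemma W_succ_right (n k : ℕ) : W n (k + 1) =
    W n k * (((3 * n + 3 * k + 1) * (3 * n + 3 * k + 2)) ^ 2 /
      ((6 * n + 3 * k + 4) * (6 * n + 3 * k + 5)) ^ 2) := by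
  have e1 : 3 * n + 3 * (k + 1) = (3 * n + 3 * k) + 3 := by ring
  have e2 : 2 * n + (k + 1) + 1 = (2 * n + k + 1) + 1 := by ring
  have e3 : n + (k + 1) = (n + k) + 1 := by ring
  have e4 : 6 * n + 3 * (k + 1) + 3 = (6 * n + 3 * k + 3) + 3 := by ring
  unfold W
  rw [e1, e2, e3, e4, fact_add_three (3 * n + 3 * k), fact_add_three (6 * n + 3 * k + 3),
    fact_add_one (2 * n + k + 1), fact_add_one (n + k)]
  have h1 := fact_ne (2 * n)
  have h2 := fact_ne (n + k)
  have h3 := fact_ne (6 * n + 3 * k + 3)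
  generalize (Nat.factorial (2 * n) : ℝ) = a at *
  generalize (Nat.factorial (n + k) : ℝ) = b at *
  generalize (Nat.factorial (6 * n + 3 * k + 3) : ℝ) = c at *
  push_cast
  have p1 : (n + k + 1 : ℝ) ≠ 0 := by positivity
  have p4 : (6 * n + 3 * k + 4 : ℝ) ≠ 0 := by positivity
  have p5 : (6 * n + 3 * k + 5 : ℝ) ≠ 0 := by positivity
  have q4 : (6 * n + 3 * k + 3 + 1 : ℝ) = 6 * n + 3 * k + 4 := by ring
  have q5 : (6 * n + 3 * k + 3 + 2 : ℝ) = 6 * n + 3 * k + 5 := by ring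
  have q6 : (6 * n + 3 * k + 3 + 3 : ℝ) = 3 * (2 * n + k + 2) := by ring
  have q7 : (3 * n + 3 * k + 3 : ℝ) = 3 * (n + k + 1) := by ring
  have p6 : (2 * n + k + 2 : ℝ) ≠ 0 := by positivity
  have q8 : (2 * n + k + 1 + 1 : ℝ) = 2 * n + k + 2 := by ring
  rw [q4, q5, q6, q7, q8]
  field_simp

/-- The absolute value of the ratio `W (n+1) k / W n k`, which is negative. -/
noncomputable def ratio (x y : ℝ) : ℝ :=
  9 * (3 * x + 4) * (3 * x + 2) * (x + 1) ^ 3 * ((3 * x + 3 * y + 1) * (3 * x + 3 * y + 2)) ^ 2 /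
    (2 * (2 * x + 1) * ((6 * x + 3 * y + 4) * (6 * x + 3 * y + 5)) ^ 2 *
      ((6 * x + 3 * y + 7) * (6 * x + 3 * y + 8)) ^ 2)

lemma W_succ_left (n k : ℕ) : W (n + 1) k = -(W n k * ratio n k) := by
  have e1 : 3 * (n + 1) + 3 * k = (3 * n + 3 * k) + 3 := by ring
  have e2 : 2 * (n + 1) + k + 1 = (2 * n + k + 1) + 2 := by ring
  have e3 : n + 1 + k = (n + k) + 1 := by ring
  have e4 : 6 * (n + 1) + 3 * k + 3 = (6 * n + 3 * k + 3) + 3 + 3 := by ring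
  have e5 : 3 * (n + 1) = 3 * n + 3 := by ring
  have e6 : 2 * (n + 1) = 2 * n + 2 := by ring
  unfold W ratio
  rw [e1, e2, e3, e4, e5, e6, fact_add_three (3 * n + 3 * k), fact_add_two (2 * n + k + 1),
    fact_add_one (n + k), fact_add_three (6 * n + 3 * k + 3 + 3),
    fact_add_three (6 * n + 3 * k + 3), fact_add_three (3 * n), fact_add_two (2 * n),
    fact_add_one n]
  have h1 := fact_ne (2 * n)
  have h2 := fact_ne (n + k)
  have h3 := fact_ne (6 * n + 3 * k + 3)
  generalize (Nat.factorial (2 * n) : ℝ) = a at *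
  generalize (Nat.factorial (n + k) : ℝ) = b at *
  generalize (Nat.factorial (6 * n + 3 * k + 3) : ℝ) = c at *
  push_cast
  have p0 : (n + 1 : ℝ) ≠ 0 := by positivity
  have p1 : (n + k + 1 : ℝ) ≠ 0 := by positivity
  have p2 : (2 * n + 1 : ℝ) ≠ 0 := by positivity
  have p4 : (6 * n + 3 * k + 4 : ℝ) ≠ 0 := by positivity
  have p5 : (6 * n + 3 * k + 5 : ℝ) ≠ 0 := by positivity
  have p6 : (2 * n + k + 2 : ℝ) ≠ 0 := by positivity
  have p7 : (6 * n + 3 * k + 7 : ℝ) ≠ 0 := by positivity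
  have p8 : (6 * n + 3 * k + 8 : ℝ) ≠ 0 := by positivity
  have p9 : (2 * n + k + 3 : ℝ) ≠ 0 := by positivity
  have q4 : (6 * n + 3 * k + 3 + 1 : ℝ) = 6 * n + 3 * k + 4 := by ring
  have q5 : (6 * n + 3 * k + 3 + 2 : ℝ) = 6 * n + 3 * k + 5 := by ring
  have q6 : (6 * n + 3 * k + 3 + 3 : ℝ) = 3 * (2 * n + k + 2) := by ring
  have r4 : (3 * (2 * n + k + 2) + 1 : ℝ) = 6 * n + 3 * k + 7 := by ring
  have r5 : (3 * (2 * n + k + 2) + 2 : ℝ) = 6 * n + 3 * k + 8 := by ring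
  have r6 : (3 * (2 * n + k + 2) + 3 : ℝ) = 3 * (2 * n + k + 3) := by ring
  have q7 : (3 * n + 3 * k + 3 : ℝ) = 3 * (n + k + 1) := by ring
  have q8 : (2 * n + k + 1 + 1 : ℝ) = 2 * n + k + 2 := by ring
  have q9 : (2 * n + k + 1 + 2 : ℝ) = 2 * n + k + 3 := by ring
  have s1 : (3 * n + 3 : ℝ) = 3 * (n + 1) := by ring
  have s2 : (2 * n + 2 : ℝ) = 2 * (n + 1) := by ring
  have s3 : (3 * (n + 1) + 1 : ℝ) = 3 * n + 4 := by ring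
  rw [q4, q5, q6, r4, r5, r6, q7, q8, q9, s1, s2, s3, pow_succ]
  field_simp
  norm_num

lemma H_sub_H (n k : ℕ) : H n k - H (n + 1) k = U n k - U n (k + 1) := by
  unfold H U
  rw [W_succ_left, W_succ_right]
  generalize W n k = w
  unfold ratio Q
  push_cast
  have hx : (0 : ℝ) ≤ n := Nat.cast_nonneg n
  have hy : (0 : ℝ) ≤ k := Nat.cast_nonneg k
  generalize (n : ℝ) = x at *
  generalize (k : ℝ) = y at *
  have p2 : (2 * x + 1 : ℝ) ≠ 0 := by positivity
  have p4 : (6 * x + 3 * y + 4 : ℝ) ≠ 0 := by positivity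
  have p5 : (6 * x + 3 * y + 5 : ℝ) ≠ 0 := by positivity
  have p7 : (6 * x + 3 * y + 7 : ℝ) ≠ 0 := by positivity
  have p8 : (6 * x + 3 * y + 8 : ℝ) ≠ 0 := by positivity
  have q7 : (6 * x + 3 * (y + 1) + 4 : ℝ) = 6 * x + 3 * y + 7 := by ring
  have q8 : (6 * x + 3 * (y + 1) + 5 : ℝ) = 6 * x + 3 * y + 8 := by ring
  rw [q7, q8]
  field_simp
  ring

/-! ### Geometric decay in `n` and summability in `k` -/

lemma ratio_nonneg {x y : ℝ} (hx : 0 ≤ x) (hy : 0 ≤ y) : 0 ≤ ratio x y := by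
  unfold ratio
  positivity

lemma ratio_bound {x y : ℝ} (hx : 0 ≤ x) (hy : 0 ≤ y) :
    ratio x y * (3 * (x + 1) + 2 * y + 1) ≤ (3 * x + 2 * y + 1) / 2 := by
  unfold ratio
  rw [div_mul_eq_mul_div, div_le_div_iff₀ (by positivity) (by norm_num), ← sub_nonneg]
  ring_nf
  positivity

lemma abs_H_succ_le (n k : ℕ) : |H (n + 1) k| ≤ |H n k| / 2 := by
  have hx : (0 : ℝ) ≤ n := Nat.cast_nonneg n
  have hy : (0 : ℝ) ≤ k := Nat.cast_nonneg k
  unfold H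
  rw [W_succ_left]
  push_cast
  rw [abs_mul, abs_mul, abs_neg, abs_mul, abs_of_nonneg (ratio_nonneg hx hy),
    abs_of_nonneg (by positivity : (0 : ℝ) ≤ 3 * (n + 1) + 2 * k + 1),
    abs_of_nonneg (by positivity : (0 : ℝ) ≤ 3 * n + 2 * k + 1), mul_assoc, mul_div_assoc]
  exact mul_le_mul_of_nonneg_left (ratio_bound hx hy) (abs_nonneg _)

lemma abs_H_le (n k : ℕ) : |H n k| ≤ (1 / 2) ^ n * |H 0 k| := by
  induction n with
  | zero => simp
  | succ n ih =>
    have := abs_H_succ_le n k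
    rw [pow_succ]
    linarith

lemma H_zero (k : ℕ) : H 0 k = 1 / (3 * k + 1) ^ 2 - 1 / (3 * k + 2) ^ 2 := by
  unfold H W
  have e1 : 2 * 0 + k + 1 = k + 1 := by ring
  have e4 : 6 * 0 + 3 * k + 3 = 3 * k + 3 := by ring
  rw [e1, e4, fact_add_three, fact_add_one]
  simp only [mul_zero, zero_add]
  have h2 := fact_ne k
  have h3 := fact_ne (3 * k)
  generalize (Nat.factorial k : ℝ) = b at *
  generalize (Nat.factorial (3 * k) : ℝ) = c at *
  push_cast
  have p1 : (k + 1 : ℝ) ≠ 0 := by positivity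
  have p4 : (3 * k + 1 : ℝ) ≠ 0 := by positivity
  have p5 : (3 * k + 2 : ℝ) ≠ 0 := by positivity
  have q : (3 * k + 3 : ℝ) = 3 * (k + 1) := by ring
  rw [q]
  field_simp
  norm_num
  ring

lemma abs_H_zero_le (k : ℕ) : |H 0 k| ≤ 2 / ((k : ℝ) + 1) ^ 3 := by
  have hy : (0 : ℝ) ≤ k := Nat.cast_nonneg k
  rw [H_zero]
  generalize (k : ℝ) = y at *
  have h : 1 / (3 * y + 1) ^ 2 - 1 / (3 * y + 2) ^ 2 =
      3 * (2 * y + 1) / ((3 * y + 1) ^ 2 * (3 * y + 2) ^ 2) := by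
    have p4 : (3 * y + 1 : ℝ) ≠ 0 := by positivity
    have p5 : (3 * y + 2 : ℝ) ≠ 0 := by positivity
    field_simp
    ring
  rw [h, abs_of_nonneg (by positivity), div_le_div_iff₀ (by positivity) (by positivity),
    ← sub_nonneg]
  ring_nf
  positivity

lemma summable_H_zero : Summable fun k => |H 0 k| := by
  have h : Summable fun k : ℕ => 2 / ((k : ℝ) + 1) ^ 3 := by
    have := (summable_nat_add_iff 1).mpr (Real.summable_one_div_nat_pow.mpr (by norm_num : 1 < 3))
    simpa [div_eq_mul_inv] using this.mul_left 2
  exact Summable.of_nonneg_of_le (fun _ => abs_nonneg _) abs_H_zero_le h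

lemma summable_H (n : ℕ) : Summable fun k => H n k := by
  refine Summable.of_abs (Summable.of_nonneg_of_le (fun _ => abs_nonneg _) (abs_H_le n) ?_)
  exact summable_H_zero.mul_left _

lemma Q_nonneg {x y : ℝ} (hx : 0 ≤ x) (hy : 0 ≤ y) : 0 ≤ Q x y := by
  unfold Q
  positivity

/-- `Q x` has degree six in `y` with nonnegative coefficients, whose sum is `Q x 1`. -/
lemma Q_le {x y : ℝ} (hx : 0 ≤ x) (hy : 0 ≤ y) : Q x y ≤ Q x 1 * (y + 1) ^ 6 := by
  rw [← sub_nonneg]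
  unfold Q
  ring_nf
  positivity

lemma abs_U_le (n k : ℕ) : |U n k| ≤ 2 * Q n 1 / ((k : ℝ) + 1) ^ 2 := by
  have hx : (0 : ℝ) ≤ n := Nat.cast_nonneg n
  have hy : (0 : ℝ) ≤ k := Nat.cast_nonneg k
  have hH : |H n k| ≤ 2 / ((k : ℝ) + 1) ^ 3 := by
    refine (abs_H_le n k).trans (le_trans ?_ (abs_H_zero_le k))
    exact mul_le_of_le_one_left (abs_nonneg _) (pow_le_one₀ (by norm_num) (by norm_num))
  have hU : U n k = H n k * (Q n k / ((3 * n + 2 * k + 1) *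
      (2 * (2 * n + 1) * ((6 * n + 3 * k + 4) * (6 * n + 3 * k + 5)) ^ 2))) := by
    unfold U H
    have : (3 * n + 2 * k + 1 : ℝ) ≠ 0 := by positivity
    field_simp
  have hR : Q n k / ((3 * n + 2 * k + 1) *
      (2 * (2 * n + 1) * ((6 * n + 3 * k + 4) * (6 * n + 3 * k + 5)) ^ 2)) ≤
      Q n 1 * ((k : ℝ) + 1) := by
    have hD : ((k : ℝ) + 1) ^ 5 ≤ (3 * n + 2 * k + 1) *
        (2 * (2 * n + 1) * ((6 * n + 3 * k + 4) * (6 * n + 3 * k + 5)) ^ 2) := by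
      have e : ((k : ℝ) + 1) ^ 5 = (k + 1) * (1 * ((k + 1) * (k + 1)) ^ 2) := by ring
      rw [e]
      gcongr <;> nlinarith
    rw [div_le_iff₀ (by positivity)]
    refine (Q_le hx hy).trans ?_
    have := mul_le_mul_of_nonneg_left hD
      (mul_nonneg (Q_nonneg hx zero_le_one) (by positivity : (0 : ℝ) ≤ k + 1))
    calc Q n 1 * ((k : ℝ) + 1) ^ 6 = Q n 1 * (k + 1) * (k + 1) ^ 5 := by ring
      _ ≤ _ := this
  rw [hU, abs_mul, abs_of_nonneg (a := Q n k / _)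
    (div_nonneg (Q_nonneg hx hy) (by positivity))]
  calc _ ≤ 2 / ((k : ℝ) + 1) ^ 3 * (Q n 1 * ((k : ℝ) + 1)) :=
        mul_le_mul hH hR (div_nonneg (Q_nonneg hx hy) (by positivity)) (by positivity)
    _ = _ := by field_simp

lemma tendsto_U (n : ℕ) : Tendsto (fun k => U n k) atTop (𝓝 0) := by
  have h : Tendsto (fun k : ℕ => 2 * Q n 1 / ((k : ℝ) + 1) ^ 2) atTop (𝓝 0) := by
    have h1 : Tendsto (fun k : ℕ => (k : ℝ) + 1) atTop atTop :=
      tendsto_atTop_add_const_right _ _ tendsto_natCast_atTop_atTop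
    exact ((tendsto_pow_atTop (two_ne_zero)).comp h1).const_div_atTop _
  exact squeeze_zero_norm (fun k => by simpa using abs_U_le n k) h

/-! ### Telescoping -/

/-- Summing the WZ relation over `k`. -/
lemma tsum_sub_tsum (n : ℕ) : ∑' k, H n k - ∑' k, H (n + 1) k = U n 0 := by
  have h1 := ((summable_H n).hasSum.sub (summable_H (n + 1)).hasSum).tendsto_sum_nat
  have h2 : ∀ N, ∑ k ∈ range N, (H n k - H (n + 1) k) = U n 0 - U n N := by
    intro N
    simp only [H_sub_H]
    exact sum_range_sub' _ _
  simp only [h2] at h1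
  have h3 := (tendsto_U n).const_sub (U n 0)
  rw [sub_zero] at h3
  exact tendsto_nhds_unique h1 h3

lemma abs_tsum_H_le (n : ℕ) : |∑' k, H n k| ≤ (1 / 2) ^ n * ∑' k, |H 0 k| := by
  rw [← tsum_mul_left]
  have h := summable_H_zero.mul_left ((1 / 2 : ℝ) ^ n)
  exact tsum_of_norm_bounded (f := fun k => H n k) h.hasSum (abs_H_le n)

lemma hasSum_U_zero : HasSum (fun n => U n 0) (∑' k, H 0 k) := by
  have hgeo : Summable fun n : ℕ => (1 / 2 : ℝ) ^ n * ∑' k, |H 0 k| :=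
    summable_geometric_two.mul_right _
  have hs : Summable fun n => ∑' k, H n k :=
    Summable.of_abs (Summable.of_nonneg_of_le (fun _ => abs_nonneg _) abs_tsum_H_le hgeo)
  have hsU : Summable fun n => U n 0 := by
    simp only [← tsum_sub_tsum]
    exact hs.sub ((summable_nat_add_iff 1).mpr hs)
  have h1 := hsU.hasSum.tendsto_sum_nat
  have h2 : ∀ N, ∑ n ∈ range N, U n 0 = ∑' k, H 0 k - ∑' k, H N k := by
    intro N
    simp only [← tsum_sub_tsum]
    exact sum_range_sub' (fun n => ∑' k, H n k) N
  simp only [h2] at h1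
  have h3 := hs.tendsto_atTop_zero.const_sub (∑' k, H 0 k)
  rw [sub_zero] at h3
  rw [← tendsto_nhds_unique h1 h3]
  exact hsU.hasSum

/-! ### Identification of the two series -/

lemma U_zero_right (n : ℕ) : U n 0 =
    (-27 : ℝ) ^ n *
          (5535 * ((n : ℝ) + 1) ^ 3 - 4689 * ((n : ℝ) + 1) ^ 2 + 1110 * ((n : ℝ) + 1) - 80) /
        (((n : ℝ) + 1) ^ 3 * (3 * ((n : ℝ) + 1) - 1) * (3 * ((n : ℝ) + 1) - 2) *
          (Nat.choose (6 * (n + 1)) (3 * (n + 1)) : ℝ) ^ 2 *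
          (Nat.choose (3 * (n + 1)) (n + 1) : ℝ)) := by
  have c1 : (Nat.choose (6 * (n + 1)) (3 * (n + 1)) : ℝ) =
      Nat.factorial (6 * n + 3 + 3) /
        (Nat.factorial (3 * n + 3) * Nat.factorial (3 * n + 3)) := by
    have e : 6 * (n + 1) = (3 * n + 3) + (3 * n + 3) := by ring
    have e' : 6 * n + 3 + 3 = (3 * n + 3) + (3 * n + 3) := by ring
    have e'' : 3 * (n + 1) = 3 * n + 3 := by ring
    rw [e, e', e'', Nat.cast_add_choose]
  have c2 : (Nat.choose (3 * (n + 1)) (n + 1) : ℝ) =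
      Nat.factorial (3 * n + 3) / (Nat.factorial (n + 1) * Nat.factorial (2 * n + 2)) := by
    have e : 3 * (n + 1) = (n + 1) + (2 * n + 2) := by ring
    have e' : 3 * n + 3 = (n + 1) + (2 * n + 2) := by ring
    rw [e, e', Nat.cast_add_choose]
  rw [c1, c2]
  unfold U W
  simp only [mul_zero, add_zero]
  rw [fact_add_three (6 * n + 3), fact_add_three (3 * n), fact_add_two (2 * n),
    fact_add_one (2 * n), fact_add_one n]
  have h1 := fact_ne (2 * n)
  have h2 := fact_ne n
  have h3 := fact_ne (6 * n + 3)
  have h4 := fact_ne (3 * n)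
  generalize (Nat.factorial (2 * n) : ℝ) = a at *
  generalize (Nat.factorial n : ℝ) = b at *
  generalize (Nat.factorial (6 * n + 3) : ℝ) = c at *
  generalize (Nat.factorial (3 * n) : ℝ) = d at *
  push_cast
  generalize (-27 : ℝ) ^ n = z
  have hx : (0 : ℝ) ≤ n := Nat.cast_nonneg n
  generalize (n : ℝ) = x at *
  have t1 : 3 * (x + 1) - 1 = 3 * x + 2 := by ring
  have t2 : 3 * (x + 1) - 2 = 3 * x + 1 := by ring
  have t3 : 6 * x + 3 + 3 = 6 * (x + 1) := by ring
  have t4 : 6 * x + 3 + 2 = 6 * x + 5 := by ring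
  have t5 : 6 * x + 3 + 1 = 6 * x + 4 := by ring
  have t6 : 3 * x + 3 = 3 * (x + 1) := by ring
  have t7 : 2 * x + 2 = 2 * (x + 1) := by ring
  rw [t1, t2, t3, t4, t5, t6, t7]
  have p1 : (x + 1 : ℝ) ≠ 0 := by positivity
  have p2 : (2 * x + 1 : ℝ) ≠ 0 := by positivity
  have p3 : (3 * x + 1 : ℝ) ≠ 0 := by positivity
  have p4 : (3 * x + 2 : ℝ) ≠ 0 := by positivity
  have p5 : (6 * x + 4 : ℝ) ≠ 0 := by positivity
  have p6 : (6 * x + 5 : ℝ) ≠ 0 := by positivity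
  unfold Q
  field_simp
  ring

lemma summable_chi3 : Summable fun n : ℕ => chi3 (n + 1) / ((n : ℝ) + 1) ^ 2 := by
  have h : Summable fun k : ℕ => 1 / ((k : ℝ) + 1) ^ 2 := by
    have := (summable_nat_add_iff 1).mpr (Real.summable_one_div_nat_pow.mpr (by norm_num : 1 < 2))
    simpa using this
  refine Summable.of_abs (Summable.of_nonneg_of_le (fun _ => abs_nonneg _) (fun n => ?_) h)
  rw [abs_div, abs_of_nonneg (by positivity : (0 : ℝ) ≤ ((n : ℝ) + 1) ^ 2)]
  gcongr
  unfold chi3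
  split_ifs <;> simp

lemma sum_chi3 (N : ℕ) :
    ∑ n ∈ range (3 * N), chi3 (n + 1) / ((n : ℝ) + 1) ^ 2 = ∑ k ∈ range N, H 0 k := by
  induction N with
  | zero => simp
  | succ N ih =>
    have e : 3 * (N + 1) = 3 * N + 1 + 1 + 1 := by ring
    rw [e, sum_range_succ, sum_range_succ, sum_range_succ, ih, sum_range_succ, H_zero]
    have c1 : chi3 (3 * N + 1) = 1 := by
      unfold chi3
      rw [if_pos (by omega)]
    have c2 : chi3 (3 * N + 1 + 1) = -1 := by
      unfold chi3
      rw [if_neg (by omega), if_pos (by omega)]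
    have c3 : chi3 (3 * N + 1 + 1 + 1) = 0 := by
      unfold chi3
      rw [if_neg (by omega), if_neg (by omega)]
    rw [c1, c2, c3]
    push_cast
    ring

lemma Kconst_eq : Kconst = ∑' k, H 0 k := by
  have h1 := summable_chi3.hasSum.tendsto_sum_nat
  have h2 : Tendsto (fun N : ℕ => 3 * N) atTop atTop :=
    tendsto_id.const_mul_atTop' (by norm_num)
  have h3 := h1.comp h2
  simp only [Function.comp_def, sum_chi3] at h3
  exact tendsto_nhds_unique h3 (summable_H 0).hasSum.tendsto_sum_nat

end WZ

theorem stmt9 :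
    Kconst = ∑' n : ℕ,
      (-27 : ℝ) ^ n *
          (5535 * ((n : ℝ) + 1) ^ 3 - 4689 * ((n : ℝ) + 1) ^ 2 + 1110 * ((n : ℝ) + 1) - 80) /
        (((n : ℝ) + 1) ^ 3 * (3 * ((n : ℝ) + 1) - 1) * (3 * ((n : ℝ) + 1) - 2) *
          (Nat.choose (6 * (n + 1)) (3 * (n + 1)) : ℝ) ^ 2 *
          (Nat.choose (3 * (n + 1)) (n + 1) : ℝ)) := by
  rw [WZ.Kconst_eq, ← WZ.hasSum_U_zero.tsum_eq]
  exact tsum_congr WZ.U_zero_right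
end

section
/- ζ(3) = (1/28) ∑_{n=1}^∞ (−1)^{n−1} (10n² − 6n + 1) · 256^n / (n^5 · C(2n, n)^5). -/
/-!
The proof accelerates `∑ 1 / (2k+1)³ = (7/8) ζ(3)` by a Wilf–Zeilberger pair. With
`U n k = C n * P n k ^ 4`, where `P n k = (1/2)_k / (n + 3/2)_k` and
`C n = (-1/4)^n (1)_n^5 / ((3/2)_n^4 (1/2)_n)`, put

* `H n k = (1 + n + 2k) * U n k`,
* `K n k = R n k * U n k`, with `R n k` quadratic in `k`.

They satisfy `H n k - H (n+1) k = K n k - K n (k+1)` (`zetaH_sub`). This comes from the well-poised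
series `∑ (a + 2k) ∏ (b_i)_k / (1 + a - b_i)_k` with all `b_i = 1/2` and `a = n + 1`.
Summation over `k` gives `S n - S (n+1) = K n 0` for `S n = ∑_k H n k`. As `S n → 0` geometrically,
`S 0 = ∑_n K n 0`. Here `H 0 k = 1 / (2k+1)³`, while `32 * K n 0` is the `n`-th term of the
central binomial series (`zetaK_zero`), so that series has sum `32 * (7/8) * ζ(3) = 28 ζ(3)`.
-/

open Filter Topology

/-- The quotient of rising factorials `(1/2)_k / (n + 3/2)_k`. -/
noncomputable def zetaP (n k : ℕ) : ℝ :=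
  ∏ j ∈ Finset.range k, ((j : ℝ) + 1 / 2) / (n + 3 / 2 + j)

/-- The normalising factor `(-1/4)^n (1)_n^5 / ((3/2)_n^4 (1/2)_n)`. -/
noncomputable def zetaC (n : ℕ) : ℝ :=
  ∏ j ∈ Finset.range n,
    (-((j : ℝ) + 1) ^ 5 / (4 * ((j : ℝ) + 3 / 2) ^ 4 * ((j : ℝ) + 1 / 2)))

/-- The first member of the Wilf–Zeilberger pair. -/
noncomputable def zetaH (n k : ℕ) : ℝ := (1 + n + 2 * k) * (zetaC n * zetaP n k ^ 4)

/-- The certificate: `K / U` as a rational function of `n` and `k`. -/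
noncomputable def zetaR (n k : ℝ) : ℝ :=
  ((10 * n ^ 2 + 14 * n + 5) / 2 + 2 * (3 * n + 2) * k + 2 * k ^ 2) / (4 * n + 2)

/-- The second member of the Wilf–Zeilberger pair. -/
noncomputable def zetaK (n k : ℕ) : ℝ := zetaR n k * (zetaC n * zetaP n k ^ 4)

lemma zetaP_succ_right (n k : ℕ) :
    zetaP n (k + 1) = zetaP n k * (((k : ℝ) + 1 / 2) / (n + 3 / 2 + k)) := by
  rw [zetaP, Finset.prod_range_succ, zetaP]

lemma zetaP_succ_left (n k : ℕ) :
    zetaP (n + 1) k = zetaP n k * (((n : ℝ) + 3 / 2) / (n + 3 / 2 + k)) := by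
  induction k with
  | zero =>
    have : (n : ℝ) + 3 / 2 ≠ 0 := by positivity
    simp [zetaP, this]
  | succ k ih =>
    have h1 : (n : ℝ) + 3 / 2 + k ≠ 0 := by positivity
    have h2 : (n : ℝ) + 3 / 2 + (k + 1) ≠ 0 := by positivity
    have h3 : (n : ℝ) + 1 + 3 / 2 + k ≠ 0 := by positivity
    rw [zetaP_succ_right, zetaP_succ_right, ih]
    push_cast
    have h4 : (n : ℝ) + 1 + 3 / 2 + k = n + 3 / 2 + (k + 1) := by ring
    rw [h4]
    field_simp

lemma zetaC_succ (n : ℕ) :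
    zetaC (n + 1) =
      zetaC n * (-((n : ℝ) + 1) ^ 5 / (4 * ((n : ℝ) + 3 / 2) ^ 4 * ((n : ℝ) + 1 / 2))) := by
  rw [zetaC, Finset.prod_range_succ, zetaC]

/-- The Wilf–Zeilberger equation. After division by `U n k` it is an identity of rational
functions in `n` and `k`. -/
lemma zetaH_sub (n k : ℕ) :
    zetaH n k - zetaH (n + 1) k = zetaK n k - zetaK n (k + 1) := by
  simp only [zetaH, zetaK, zetaR]
  rw [zetaP_succ_left, zetaP_succ_right, zetaC_succ]
  push_cast
  have h1 : (n : ℝ) + 3 / 2 + k ≠ 0 := by positivity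
  have h2 : (n : ℝ) + 3 / 2 ≠ 0 := by positivity
  have h3 : (n : ℝ) + 1 / 2 ≠ 0 := by positivity
  have h4 : 4 * (n : ℝ) + 2 = 4 * ((n : ℝ) + 1 / 2) := by ring
  rw [h4]
  generalize zetaC n = c
  generalize zetaP n k = p
  generalize (n : ℝ) = x at *
  generalize (k : ℝ) = y at *
  -- Naming the denominators keeps their nonvanishing available to `field_simp`.
  generalize hu : x + 3 / 2 + y = u at *
  generalize hv : x + 3 / 2 = v at *
  generalize hw : x + 1 / 2 = w at *
  field_simp
  subst hu hv hw
  ring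

lemma zetaP_nonneg (n k : ℕ) : 0 ≤ zetaP n k :=
  Finset.prod_nonneg fun j _ => by positivity

lemma zetaP_zero (k : ℕ) : zetaP 0 k = 1 / (2 * k + 1) := by
  induction k with
  | zero => simp [zetaP]
  | succ k ih =>
    rw [zetaP_succ_right, ih]
    push_cast
    have h1 : 2 * (k : ℝ) + 1 ≠ 0 := by positivity
    have h2 : 0 + 3 / 2 + (k : ℝ) ≠ 0 := by positivity
    have h3 : 2 * ((k : ℝ) + 1) + 1 ≠ 0 := by positivity
    field_simp
    ring

lemma zetaP_le (n k : ℕ) : zetaP n k ≤ 1 / (2 * k + 1) := by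
  rw [← zetaP_zero]
  refine Finset.prod_le_prod (fun j _ => by positivity) fun j _ => ?_
  gcongr
  simp

lemma zetaP_pow_le (n k : ℕ) : zetaP n k ^ 4 ≤ 1 / (2 * (k : ℝ) + 1) ^ 4 := by
  have := pow_le_pow_left₀ (zetaP_nonneg n k) (zetaP_le n k) 4
  rwa [div_pow, one_pow] at this

lemma abs_zetaC_le (n : ℕ) : |zetaC n| ≤ (1 / 4) ^ n := by
  induction n with
  | zero => simp [zetaC]
  | succ n ih =>
    rw [zetaC_succ, abs_mul, pow_succ (1 / 4 : ℝ)]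
    refine mul_le_mul ih ?_ (abs_nonneg _) (by positivity)
    have hx : (0 : ℝ) ≤ n := n.cast_nonneg
    have h0 : 0 ≤ ((n : ℝ) + 1) ^ 5 / (4 * ((n : ℝ) + 3 / 2) ^ 4 * ((n : ℝ) + 1 / 2)) := by
      positivity
    rw [neg_div, abs_neg, abs_of_nonneg h0, div_le_iff₀ (by positivity)]
    clear h0
    generalize (n : ℝ) = x at *
    have : 0 ≤ (x + 3 / 2) ^ 4 * (x + 1 / 2) - (x + 1) ^ 5 := by
      ring_nf
      positivity
    linarith

lemma abs_zetaC_mul_le (n : ℕ) : |zetaC n| * (n + 1) ≤ (1 / 2) ^ n := by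
  have h1 : ((n : ℝ) + 1) ≤ 2 ^ n := by exact_mod_cast n.lt_two_pow_self
  calc |zetaC n| * (n + 1) ≤ (1 / 4) ^ n * 2 ^ n :=
        mul_le_mul (abs_zetaC_le n) h1 (by positivity) (by positivity)
    _ = (1 / 2) ^ n := by rw [← mul_pow]; norm_num

lemma summable_odd_cubes : Summable fun k : ℕ => 1 / (2 * (k : ℝ) + 1) ^ 3 := by
  have h : Summable fun k : ℕ => 1 / (k : ℝ) ^ 3 :=
    Real.summable_one_div_nat_pow.mpr (by norm_num)
  have := h.comp_injective (i := fun k : ℕ => 2 * k + 1) (fun a b hab => by simpa using hab)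
  refine this.congr fun k => ?_
  simp

lemma abs_zetaH_le (n k : ℕ) : |zetaH n k| ≤ (1 / 2) ^ n * (1 / (2 * (k : ℝ) + 1) ^ 3) := by
  have h0 : (0 : ℝ) ≤ 1 + n + 2 * k := by positivity
  have h1 : (0 : ℝ) < 2 * k + 1 := by positivity
  rw [zetaH, abs_mul, abs_mul, abs_of_nonneg h0, abs_of_nonneg (pow_nonneg (zetaP_nonneg n k) 4)]
  calc (1 + n + 2 * (k : ℝ)) * (|zetaC n| * zetaP n k ^ 4)
      ≤ ((n + 1) * (2 * k + 1)) * (|zetaC n| * (1 / (2 * (k : ℝ) + 1) ^ 4)) := by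
        gcongr
        · have : (0 : ℝ) ≤ n * k := by positivity
          nlinarith
        · exact zetaP_pow_le n k
    _ = (|zetaC n| * (n + 1)) * (1 / (2 * (k : ℝ) + 1) ^ 3) := by
        field_simp
    _ ≤ _ := by
        gcongr
        exact abs_zetaC_mul_le n

lemma summable_zetaH (n : ℕ) : Summable (zetaH n) :=
  Summable.of_norm_bounded (summable_odd_cubes.mul_left _) (abs_zetaH_le n)

lemma tendsto_zetaK (n : ℕ) : Tendsto (zetaK n) atTop (𝓝 0) := by
  -- The quadratic numerator of `R n k` is at most a constant times `(2k+1)²`.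
  set M : ℝ := (10 * (n : ℝ) ^ 2 + 14 * n + 5) / 2 + 2 * (3 * n + 2) + 2 with hM
  have hb : ∀ k : ℕ, ‖zetaK n k‖ ≤ M * |zetaC n| * (1 / ((k : ℝ) + 1)) := by
    intro k
    have h1 : (0 : ℝ) < 2 * k + 1 := by positivity
    have hR0 : 0 ≤ zetaR n k := by unfold zetaR; positivity
    have hR : zetaR n k ≤ M * (2 * k + 1) ^ 2 := by
      unfold zetaR
      have hn : (0 : ℝ) ≤ n := n.cast_nonneg
      have hk : (0 : ℝ) ≤ k := k.cast_nonneg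
      refine (div_le_self (by positivity) (by linarith)).trans ?_
      rw [hM]
      generalize (n : ℝ) = x at *
      generalize (k : ℝ) = y at *
      rw [← sub_nonneg]
      ring_nf
      positivity
    rw [zetaK, Real.norm_eq_abs, abs_mul, abs_mul, abs_of_nonneg hR0,
      abs_of_nonneg (pow_nonneg (zetaP_nonneg n k) 4)]
    calc zetaR n k * (|zetaC n| * zetaP n k ^ 4)
        ≤ (M * (2 * k + 1) ^ 2) * (|zetaC n| * (1 / (2 * (k : ℝ) + 1) ^ 4)) := by
          gcongr
          exact zetaP_pow_le n k
      _ = M * |zetaC n| * (1 / (2 * (k : ℝ) + 1) ^ 2) := by field_simp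
      _ ≤ _ := by
          gcongr
          have hk : (0 : ℝ) ≤ k := k.cast_nonneg
          nlinarith
  refine squeeze_zero_norm hb ?_
  simpa using tendsto_one_div_add_atTop_nhds_zero_nat.const_mul (M * |zetaC n|)

lemma tsum_zetaH_sub (n : ℕ) : (∑' k, zetaH n k) - ∑' k, zetaH (n + 1) k = zetaK n 0 := by
  have h1 := ((summable_zetaH n).hasSum.sub (summable_zetaH (n + 1)).hasSum).tendsto_sum_nat
  refine tendsto_nhds_unique h1 ?_
  have h2 : ∀ m, ∑ k ∈ Finset.range m, (zetaH n k - zetaH (n + 1) k) = zetaK n 0 - zetaK n m := by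
    intro m
    simp only [zetaH_sub]
    exact Finset.sum_range_sub' _ _
  simp only [h2]
  simpa using (tendsto_zetaK n).const_sub (zetaK n 0)

lemma tendsto_tsum_zetaH : Tendsto (fun n => ∑' k, zetaH n k) atTop (𝓝 0) := by
  have hb : ∀ n, ‖∑' k, zetaH n k‖ ≤ (1 / 2) ^ n * ∑' k : ℕ, 1 / (2 * (k : ℝ) + 1) ^ 3 := by
    intro n
    exact tsum_of_norm_bounded (summable_odd_cubes.hasSum.mul_left _) (abs_zetaH_le n)
  refine squeeze_zero_norm hb ?_
  have h := (tendsto_pow_atTop_nhds_zero_of_lt_one (r := (1 / 2 : ℝ)) (by norm_num)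
    (by norm_num)).mul_const (∑' k : ℕ, 1 / (2 * (k : ℝ) + 1) ^ 3)
  rwa [zero_mul] at h

lemma summable_zetaK_zero : Summable fun n => zetaK n 0 := by
  have hg : Summable fun n : ℕ => (5 / 2) * (1 / 2 : ℝ) ^ n :=
    (summable_geometric_of_lt_one (by norm_num) (by norm_num)).mul_left _
  refine Summable.of_norm_bounded hg fun n => ?_
  have hn : (0 : ℝ) ≤ n := n.cast_nonneg
  have hR0 : 0 ≤ zetaR n 0 := by unfold zetaR; positivity
  have hR : zetaR n 0 ≤ 5 / 2 * (n + 1) := by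
    unfold zetaR
    rw [div_le_iff₀ (by positivity)]
    nlinarith
  have hP : zetaP n 0 = 1 := by simp [zetaP]
  rw [zetaK, hP, Real.norm_eq_abs, abs_mul, Nat.cast_zero, abs_of_nonneg hR0, one_pow, mul_one]
  have := abs_zetaC_mul_le n
  have := mul_le_mul_of_nonneg_right hR (abs_nonneg (zetaC n))
  linarith

lemma tsum_zetaK_zero : ∑' n, zetaK n 0 = ∑' k, zetaH 0 k := by
  refine tendsto_nhds_unique summable_zetaK_zero.hasSum.tendsto_sum_nat ?_
  have h : ∀ m, ∑ n ∈ Finset.range m, zetaK n 0 = (∑' k, zetaH 0 k) - ∑' k, zetaH m k := by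
    intro m
    simp only [← tsum_zetaH_sub]
    exact Finset.sum_range_sub' (fun n => ∑' k, zetaH n k) m
  simp only [h]
  simpa using tendsto_tsum_zetaH.const_sub (∑' k, zetaH 0 k)

lemma zetaC_eq (n : ℕ) :
    zetaC n = (2 * n + 1) / 8 * ((-1) ^ n * 256 ^ (n + 1) /
      (((n : ℝ) + 1) ^ 5 * (Nat.centralBinom (n + 1) : ℝ) ^ 5)) := by
  induction n with
  | zero => norm_num [zetaC, Nat.centralBinom]
  | succ n ih =>
    have hc : ((n : ℝ) + 1 + 1) * (Nat.centralBinom (n + 1 + 1) : ℝ) =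
        2 * (2 * (n + 1) + 1) * Nat.centralBinom (n + 1) := by
      exact_mod_cast Nat.succ_mul_centralBinom_succ (n + 1)
    have hb : (Nat.centralBinom (n + 1) : ℝ) ≠ 0 := by
      exact_mod_cast (Nat.centralBinom_pos _).ne'
    rw [zetaC_succ, ih]
    push_cast
    rw [← mul_pow ((n : ℝ) + 1 + 1), hc]
    have h2 : (n : ℝ) + 3 / 2 = (2 * (n + 1) + 1) / 2 := by ring
    have h3 : (n : ℝ) + 1 / 2 = (2 * n + 1) / 2 := by ring
    have h4 : 2 * (n : ℝ) + 1 ≠ 0 := by positivity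
    have h5 : 2 * ((n : ℝ) + 1) + 1 ≠ 0 := by positivity
    have h6 : (n : ℝ) + 1 ≠ 0 := by positivity
    rw [h2, h3]
    generalize (Nat.centralBinom (n + 1) : ℝ) = b at *
    field_simp
    ring

lemma zetaK_zero (n : ℕ) :
    (-1 : ℝ) ^ n * (10 * ((n : ℝ) + 1) ^ 2 - 6 * ((n : ℝ) + 1) + 1) * 256 ^ (n + 1) /
      (((n : ℝ) + 1) ^ 5 * (Nat.choose (2 * (n + 1)) (n + 1) : ℝ) ^ 5) = 32 * zetaK n 0 := by
  have hP : zetaP n 0 = 1 := by simp [zetaP]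
  have h4 : 4 * (n : ℝ) + 2 = 2 * (2 * n + 1) := by ring
  have h5 : 2 * (n : ℝ) + 1 ≠ 0 := by positivity
  rw [zetaK, hP, zetaC_eq, Nat.centralBinom, zetaR, h4, Nat.cast_zero]
  generalize (((n : ℝ) + 1) ^ 5 * (Nat.choose (2 * (n + 1)) (n + 1) : ℝ) ^ 5) = d
  rw [div_eq_mul_inv, div_eq_mul_inv _ d]
  field_simp
  ring

lemma tsum_zetaH_zero :
    ∑' k, zetaH 0 k = 7 / 8 * ∑' k : ℕ, 1 / ((k : ℝ) + 1) ^ 3 := by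
  have hH : ∀ k, zetaH 0 k = 1 / (2 * (k : ℝ) + 1) ^ 3 := by
    intro k
    have h1 : 2 * (k : ℝ) + 1 ≠ 0 := by positivity
    rw [zetaH, zetaP_zero]
    simp only [zetaC, Finset.range_zero, Finset.prod_empty]
    field_simp
    push_cast
    ring
  -- Split `ζ(3)` into odd and even denominators; the even part is `ζ(3) / 8`.
  have hodd : Summable fun k : ℕ => 1 / (((2 * k + 1 : ℕ) : ℝ) + 1) ^ 3 := by
    have h := (summable_nat_add_iff 1).mpr
      (Real.summable_one_div_nat_pow (p := 3) |>.mpr (by norm_num))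
    refine (h.mul_left (1 / 8)).congr fun k => ?_
    push_cast
    have : (2 * (k : ℝ) + 1 + 1) = 2 * (k + 1) := by ring
    rw [this]
    field_simp
    norm_num
  have heven : Summable fun k : ℕ => 1 / (((2 * k : ℕ) : ℝ) + 1) ^ 3 := by
    simpa using summable_odd_cubes
  have hs := tsum_even_add_odd (f := fun k : ℕ => 1 / ((k : ℝ) + 1) ^ 3) heven hodd
  have he : ∑' k : ℕ, 1 / (((2 * k + 1 : ℕ) : ℝ) + 1) ^ 3 =
      1 / 8 * ∑' k : ℕ, 1 / ((k : ℝ) + 1) ^ 3 := by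
    rw [← tsum_mul_left]
    refine tsum_congr fun k => ?_
    push_cast
    have : (2 * (k : ℝ) + 1 + 1) = 2 * (k + 1) := by ring
    rw [this]
    field_simp
    norm_num
  simp only [hH]
  rw [he] at hs
  push_cast at hs
  linarith

theorem stmt13 :
    (∑' k : ℕ, 1 / ((k : ℝ) + 1) ^ 3)
      = (1 / 28) * ∑' n : ℕ,
          (-1 : ℝ) ^ n * (10 * ((n : ℝ) + 1) ^ 2 - 6 * ((n : ℝ) + 1) + 1) *
            256 ^ (n + 1) /
            (((n : ℝ) + 1) ^ 5 * (Nat.choose (2 * (n + 1)) (n + 1) : ℝ) ^ 5) := by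
  simp only [zetaK_zero]
  rw [tsum_mul_left, tsum_zetaK_zero, tsum_zetaH_zero]
  ring
end
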